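/- arXiv:1109.0719 — 9 statements merged into one kernel-verified Lean document; each statement's English description precedes it below -/
import Mathlib

section
/- Let k ≥ 1 and 0 ≤ l ≤ 2k−1 be integers and G = (V, E) a multigraph. Then any two sub-multisets E₁, E₂ of E that are maximal with respect to inclusion among sub-multisets E' for which (V, E') is (k,l)-sparse have the same cardinality. Consequently, if the edges of E are added one at a time starting from (V, ∅), discarding an edge exactly when its addition creates a (k,l)-redundant subgraph, the number of discarded edges is independent of the order of addition and equals the minimum cardinality of a set F of edges such that (V, E ∖ F) is (k,l)-sparse. -/
/-!  Multigraphs: finite vertex set, finite multiset of edges (unordered pairs of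
distinct vertices, parallel edges allowed, loops excluded). -/

/-- A multigraph on vertex type `V`: a finite set of vertices together with a
finite multiset of edges (unordered pairs of vertices). -/
structure MG (V : Type*) where
  verts : Finset V
  edges : Multiset (Sym2 V)

namespace MG

variable {V : Type*} [DecidableEq V]

/-- Well-formedness: no loops, and every edge joins vertices of the graph. -/
def WF (G : MG V) : Prop :=
  (∀ e ∈ G.edges, ¬ e.IsDiag) ∧ (∀ e ∈ G.edges, e ∈ G.verts.sym2)

/-- `G'` is a subgraph of `G`: vertices a subset, edges a sub-multiset, and all
edges of `G'` join vertices of `G'`. -/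
def IsSubgraph (G' G : MG V) : Prop :=
  G'.verts ⊆ G.verts ∧ G'.edges ≤ G.edges ∧ ∀ e ∈ G'.edges, e ∈ G'.verts.sym2

/-- `(k,l)`-sparsity: every subgraph with `n > 1` vertices and `m` edges
satisfies `m ≤ k n - l`. -/
def Sparse (k l : ℤ) (G : MG V) : Prop :=
  ∀ G' : MG V, G'.IsSubgraph G → 1 < G'.verts.card →
    (Multiset.card G'.edges : ℤ) ≤ k * G'.verts.card - l

/-- `(k,l)`-redundant: not `(k,l)`-sparse. -/
def Redundant (k l : ℤ) (G : MG V) : Prop := ¬ Sparse k l G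

/-- `(k,l)`-tight: sparse with exactly `k|V| - l` edges. -/
def Tight (k l : ℤ) (G : MG V) : Prop :=
  Sparse k l G ∧ (Multiset.card G.edges : ℤ) = k * G.verts.card - l

/-- `A` and `B` are `(k,l)`-rigidly connected in `G` if some `(k,l)`-tight
subgraph of `G` contains both. -/
def RigidlyConnected (k l : ℤ) (G : MG V) (A B : V) : Prop :=
  ∃ T : MG V, T.IsSubgraph G ∧ Tight k l T ∧ A ∈ T.verts ∧ B ∈ T.verts

/-- `r_AB(H)`: the maximum of `|E_h| - k |V_h|` over all `(k,l)`-sparse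
subgraphs `h` of `H` containing both `A` and `B`. -/
noncomputable def rAB (k l : ℤ) (H : MG V) (A B : V) : ℤ :=
  sSup {z : ℤ | ∃ h : MG V, h.IsSubgraph H ∧ Sparse k l h ∧
    A ∈ h.verts ∧ B ∈ h.verts ∧ z = (Multiset.card h.edges : ℤ) - k * h.verts.card}

/-- `M_AB(H) = max (r_AB(H) + 2k, 0)`. -/
noncomputable def MAB (k l : ℤ) (H : MG V) (A B : V) : ℤ :=
  max (rAB k l H A B + 2 * k) 0

/-- The subgraph of `G` induced by a set `S` of vertices. -/
def induced (G : MG V) (S : Finset V) : MG V :=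
  ⟨S, G.edges.filter (· ∈ S.sym2)⟩

/-- The intersection of `g` with the subgraph induced by `VH`: vertices
`g.verts ∩ VH` and the edges of `g` with both endpoints in `VH`. -/
def inter (g : MG V) (VH : Finset V) : MG V :=
  ⟨g.verts ∩ VH, g.edges.filter (· ∈ VH.sym2)⟩

/-- The renormalizability condition: every edge of `G` with exactly one
endpoint in `VH` is incident to `A` or `B`. -/
def RenormCond (G : MG V) (VH : Finset V) (A B : V) : Prop :=
  ∀ e ∈ G.edges, (∃ v ∈ e, v ∈ VH) → (∃ v ∈ e, v ∉ VH) → (A ∈ e ∨ B ∈ e)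

/-- The renormalized graph `R(G)`: delete all edges with both endpoints in
`VH`, delete the vertices of `VH` other than `A, B`, and insert
`M_AB(H)` parallel edges between `A` and `B`, where `H` is the subgraph
induced by `VH`. -/
noncomputable def renormG (k l : ℤ) (G : MG V) (VH : Finset V) (A B : V) : MG V :=
  ⟨(G.verts \ VH) ∪ {A, B},
   G.edges.filter (fun e => e ∉ VH.sym2) +
     Multiset.replicate (MAB k l (G.induced VH) A B).toNat s(A, B)⟩

/-- Renormalization of a subgraph `g` of `G`: the part of `g` outside `VH` is
left unchanged, and its intersection `h` with the subgraph induced by `VH` is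
replaced by `M_AB(h)` parallel `A`–`B` edges if both `A` and `B` belong to `g`,
and by no edges otherwise. -/
noncomputable def renormSub (k l : ℤ) (g : MG V) (VH : Finset V) (A B : V) : MG V :=
  ⟨(g.verts \ VH) ∪ (g.verts ∩ {A, B}),
   g.edges.filter (fun e => e ∉ VH.sym2) +
     (if A ∈ g.verts ∧ B ∈ g.verts then
        Multiset.replicate (MAB k l (g.inter VH) A B).toNat s(A, B)
      else 0)⟩

/-- The maximum cardinality of a sub-multiset `E'` of the edges of `G` such
that `(V, E')` is `(k,l)`-sparse. -/
noncomputable def maxSparseCard (k l : ℤ) (G : MG V) : ℕ :=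
  sSup {n : ℕ | ∃ E' : Multiset (Sym2 V), E' ≤ G.edges ∧
    Sparse k l (⟨G.verts, E'⟩ : MG V) ∧ Multiset.card E' = n}

/-- The number of `(k,l)`-redundant edges of `G`. -/
noncomputable def nred (k l : ℤ) (G : MG V) : ℕ :=
  Multiset.card G.edges - maxSparseCard k l G

/-- Connectivity: any two vertices are joined by a path of edges. -/
def Connected (G : MG V) : Prop :=
  ∀ a ∈ G.verts, ∀ b ∈ G.verts,
    Relation.ReflTransGen (fun x y => s(x, y) ∈ G.edges) a b

end MG

/- The sequential edge-addition process: starting from no edges, add the edges of the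
list `L` one at a time, discarding an edge exactly when its addition destroys
`(k,l)`-sparsity (i.e. creates a `(k,l)`-redundant subgraph). -/
open Classical in
noncomputable def addEdges {V : Type*} [DecidableEq V] (k l : ℤ) (Vs : Finset V)
    (L : List (Sym2 V)) : Multiset (Sym2 V) :=
  L.foldl (fun acc e =>
    if MG.Sparse k l (⟨Vs, e ::ₘ acc⟩ : MG V) then e ::ₘ acc else acc) 0


namespace MGaux

variable {V : Type*} [DecidableEq V]

/-- number of edges of `E` inside `S` -/
def ic (E : Multiset (Sym2 V)) (S : Finset V) : ℕ :=
  Multiset.card (E.filter (· ∈ S.sym2))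

theorem ic_cons (e : Sym2 V) (E : Multiset (Sym2 V)) (S : Finset V) :
    ic (e ::ₘ E) S = ic E S + if e ∈ S.sym2 then 1 else 0 := by
  unfold ic
  by_cases h : e ∈ S.sym2
  · rw [Multiset.filter_cons_of_pos _ h]; simp [h]
  · rw [Multiset.filter_cons_of_neg _ h]; simp [h]

theorem sparse_iff (k l : ℤ) (Vs : Finset V) (E : Multiset (Sym2 V)) :
    MG.Sparse k l (⟨Vs, E⟩ : MG V) ↔
      ∀ S ⊆ Vs, 1 < S.card → (ic E S : ℤ) ≤ k * S.card - l := by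
  constructor
  · intro h S hS hc
    exact h ⟨S, E.filter (· ∈ S.sym2)⟩
      ⟨hS, Multiset.filter_le _ _, fun e he => (Multiset.mem_filter.1 he).2⟩ hc
  · rintro h ⟨S, E'⟩ ⟨h1, h2, h3⟩ hc
    refine le_trans ?_ (h S h1 hc)
    have : E' ≤ E.filter (· ∈ S.sym2) := Multiset.le_filter.2 ⟨h2, h3⟩
    exact_mod_cast Multiset.card_le_card this

theorem sparse_mono {k l : ℤ} {Vs : Finset V} {E E' : Multiset (Sym2 V)} (hE : E ≤ E')
    (h : MG.Sparse k l (⟨Vs, E'⟩ : MG V)) : MG.Sparse k l (⟨Vs, E⟩ : MG V) := by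
  rintro G' ⟨h1, h2, h3⟩ hc
  exact h G' ⟨h1, le_trans h2 hE, h3⟩ hc

theorem ic_super (E : Multiset (Sym2 V)) (S T : Finset V) :
    ic E S + ic E T ≤ ic E (S ∪ T) + ic E (S ∩ T) := by
  induction E using Multiset.induction_on with
  | empty => simp [ic]
  | cons e E ih =>
    simp only [ic_cons]
    have h1 : e ∈ S.sym2 → e ∈ (S ∪ T).sym2 :=
      fun h => Finset.sym2_mono Finset.subset_union_left h
    have h2 : e ∈ T.sym2 → e ∈ (S ∪ T).sym2 :=
      fun h => Finset.sym2_mono Finset.subset_union_right h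
    have h3 : e ∈ S.sym2 → e ∈ T.sym2 → e ∈ (S ∩ T).sym2 := by
      simp only [Finset.mem_sym2_iff, Finset.mem_inter]
      exact fun a b v hv => ⟨a v hv, b v hv⟩
    split_ifs <;> first | omega | (exfalso; tauto)

/-- tight sets -/
def Tt (k l : ℤ) (Vs : Finset V) (E : Multiset (Sym2 V)) (S : Finset V) : Prop :=
  S ⊆ Vs ∧ 1 < S.card ∧ (ic E S : ℤ) = k * S.card - l

theorem union_tight {k l : ℤ} {Vs : Finset V} {E : Multiset (Sym2 V)}
    (h : MG.Sparse k l (⟨Vs, E⟩ : MG V)) {S T : Finset V} (hS : Tt k l Vs E S)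
    (hT : Tt k l Vs E T) (hST : 1 < (S ∩ T).card) : Tt k l Vs E (S ∪ T) := by
  rw [sparse_iff] at h
  obtain ⟨a1, a2, a3⟩ := hS
  obtain ⟨b1, b2, b3⟩ := hT
  have c1 : S ∪ T ⊆ Vs := Finset.union_subset a1 b1
  have c2 : 1 < (S ∪ T).card := lt_of_lt_of_le a2 (Finset.card_le_card Finset.subset_union_left)
  refine ⟨c1, c2, ?_⟩
  have d1 := h _ c1 c2
  have d2 := h (S ∩ T) (fun x hx => a1 (Finset.mem_inter.1 hx).1) hST
  have d3 := ic_super E S T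
  have d4 := Finset.card_union_add_card_inter S T
  zify at d3 d4
  have d5 : k * ((S ∪ T).card : ℤ) + k * ((S ∩ T).card : ℤ) = k * (S.card : ℤ) + k * (T.card : ℤ) := by
    rw [← mul_add, ← mul_add, d4]
  linarith

theorem one_lt_of_edge {e : Sym2 V} (hd : ¬ e.IsDiag) {S : Finset V} (h : e ∈ S.sym2) :
    1 < S.card := by
  induction e using Sym2.ind with
  | _ x y =>
    rw [Sym2.mk_isDiag_iff] at hd
    rw [Finset.mk_mem_sym2_iff] at h
    exact Finset.one_lt_card.2 ⟨x, h.1, y, h.2, hd⟩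

theorem decomp (F : Finset (Finset V)) (E : Multiset (Sym2 V))
    (hu : ∀ e ∈ E, ∀ S ∈ F, ∀ T ∈ F, e ∈ S.sym2 → e ∈ T.sym2 → S = T) :
    Multiset.card E =
      Multiset.card (E.filter (fun e => ∀ S ∈ F, e ∉ S.sym2)) + ∑ S ∈ F, ic E S := by
  induction E using Multiset.induction_on with
  | empty => simp [ic]
  | cons e E ih =>
    have ih' := ih (fun e he => hu e (Multiset.mem_cons_of_mem he))
    simp only [ic_cons, Finset.sum_add_distrib, Multiset.card_cons]
    by_cases hc : ∀ S ∈ F, e ∉ S.sym2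
    · rw [Multiset.filter_cons_of_pos _ hc, Multiset.card_cons]
      have : ∑ S ∈ F, (if e ∈ S.sym2 then 1 else 0) = 0 :=
        Finset.sum_eq_zero (fun S hS => if_neg (hc S hS))
      omega
    · rw [Multiset.filter_cons_of_neg _ hc]
      push Not at hc
      obtain ⟨S, hS, heS⟩ := hc
      have : ∑ S ∈ F, (if e ∈ S.sym2 then 1 else 0) = 1 := by
        rw [Finset.sum_eq_single S]
        · exact if_pos heS
        · intro T hT hne
          exact if_neg (fun h => hne (hu e (Multiset.mem_cons_self e E) T hT S hS h heS))
        · exact fun h => absurd hS h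
      omega

open Classical in
theorem key {k l : ℤ} {Vs : Finset V} {E E₁ E₂ : Multiset (Sym2 V)}
    (hd : ∀ e ∈ E, ¬ e.IsDiag)
    (h1 : E₁ ≤ E) (s1 : MG.Sparse k l (⟨Vs, E₁⟩ : MG V))
    (m1 : ∀ e, E₁.count e < E.count e → ¬ MG.Sparse k l (⟨Vs, e ::ₘ E₁⟩ : MG V))
    (h2 : E₂ ≤ E) (s2 : MG.Sparse k l (⟨Vs, E₂⟩ : MG V)) :
    Multiset.card E₂ ≤ Multiset.card E₁ := by
  set F : Finset (Finset V) := Vs.powerset.filter (fun S => Maximal (Tt k l Vs E₁) S) with hF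
  have hu : ∀ e ∈ E, ∀ S ∈ F, ∀ T ∈ F, e ∈ S.sym2 → e ∈ T.sym2 → S = T := by
    intro e he S hS T hT heS heT
    have mS := (Finset.mem_filter.1 hS).2
    have mT := (Finset.mem_filter.1 hT).2
    have h3 : e ∈ (S ∩ T).sym2 := by
      simp only [Finset.mem_sym2_iff, Finset.mem_inter] at *
      exact fun v hv => ⟨heS v hv, heT v hv⟩
    have hU := union_tight s1 mS.prop mT.prop (one_lt_of_edge (hd e he) h3)
    have e1 : S = S ∪ T := mS.eq_of_le hU Finset.subset_union_left
    have e2 : T = S ∪ T := mT.eq_of_le hU Finset.subset_union_right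
    exact e1.trans e2.symm
  rw [decomp F E₁ (fun e he => hu e (Multiset.mem_of_le h1 he)),
    decomp F E₂ (fun e he => hu e (Multiset.mem_of_le h2 he))]
  refine add_le_add ?_ ?_
  · apply Multiset.card_le_card
    rw [Multiset.le_iff_count]
    intro e
    rw [Multiset.count_filter, Multiset.count_filter]
    split_ifs with hc
    · refine le_trans (Multiset.count_le_of_le e h2) ?_
      by_contra hlt
      push Not at hlt
      have hns := m1 e hlt
      rw [sparse_iff] at hns s1
      push Not at hns
      obtain ⟨S, hS, hS1, hS2⟩ := hns
      have h4 := s1 S hS hS1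
      rw [ic_cons] at hS2
      by_cases heS : e ∈ S.sym2
      · simp only [heS, if_true] at hS2
        push_cast at hS2
        have ht : Tt k l Vs E₁ S := ⟨hS, hS1, by omega⟩
        have hfin : {S | Tt k l Vs E₁ S}.Finite :=
          Vs.powerset.finite_toSet.subset (fun T hT => Finset.mem_coe.2 (Finset.mem_powerset.2 hT.1))
        obtain ⟨T, hST, hT⟩ := hfin.exists_le_maximal ht
        exact hc T (Finset.mem_filter.2 ⟨Finset.mem_powerset.2 hT.prop.1, hT⟩)
          (Finset.sym2_mono hST heS)
      · simp only [heS, if_false] at hS2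
        push_cast at hS2
        omega
    · exact le_rfl
  · apply Finset.sum_le_sum
    intro S hS
    obtain ⟨a, b, c⟩ := (Finset.mem_filter.1 hS).2.prop
    have := (sparse_iff k l Vs E₂).1 s2 S a b
    omega

open Classical in
theorem fold_inv (k l : ℤ) (Vs : Finset V) (L : List (Sym2 V)) :
    ∀ acc : Multiset (Sym2 V), MG.Sparse k l (⟨Vs, acc⟩ : MG V) →
    ∀ R, R = L.foldl (fun acc e =>
      if MG.Sparse k l (⟨Vs, e ::ₘ acc⟩ : MG V) then e ::ₘ acc else acc) acc →
    acc ≤ R ∧ R ≤ acc + (L : Multiset (Sym2 V)) ∧ MG.Sparse k l (⟨Vs, R⟩ : MG V) ∧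
    ∀ e, R.count e < (acc + (L : Multiset (Sym2 V))).count e →
      ¬ MG.Sparse k l (⟨Vs, e ::ₘ R⟩ : MG V) := by
  induction L with
  | nil =>
    intro acc hs R hR
    simp only [List.foldl_nil] at hR
    subst hR
    refine ⟨le_rfl, by simp, hs, ?_⟩
    intro e he
    simp at he
  | cons a L ih =>
    intro acc hs R hR
    rw [List.foldl_cons] at hR
    by_cases h : MG.Sparse k l (⟨Vs, a ::ₘ acc⟩ : MG V)
    · rw [if_pos h] at hR
      obtain ⟨i1, i2, i3, i4⟩ := ih _ h R hR
      have heq : a ::ₘ acc + (L : Multiset (Sym2 V)) = acc + ((a :: L : List (Sym2 V)) : Multiset (Sym2 V)) := by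
        rw [← Multiset.cons_coe, Multiset.cons_add, Multiset.add_cons]
      rw [heq] at i2 i4
      exact ⟨le_trans (Multiset.le_cons_self _ _) i1, i2, i3, i4⟩
    · rw [if_neg h] at hR
      obtain ⟨i1, i2, i3, i4⟩ := ih _ hs R hR
      refine ⟨i1, ?_, i3, ?_⟩
      · rw [← Multiset.cons_coe, Multiset.add_cons]
        exact le_trans i2 (Multiset.le_cons_self _ _)
      · intro e he
        by_cases hea : e = a
        · subst hea
          exact fun hh => h (sparse_mono (Multiset.cons_le_cons e i1) hh)
        · apply i4
          rw [← Multiset.cons_coe, Multiset.add_cons, Multiset.count_cons_of_ne hea] at he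
          exact he

end MGaux

/-- Any two maximal `(k,l)`-sparse sub-multisets of the edges of `G` have
the same cardinality; consequently, adding the edges one at a time in any order and
discarding an edge exactly when its addition creates a `(k,l)`-redundant subgraph, the
number of discarded edges is independent of the order of addition and equals the minimum
cardinality of a set `F` of edges such that `(V, E ∖ F)` is `(k,l)`-sparse. -/
theorem maximal_sparse_card_unique {V : Type*} [DecidableEq V] (k l : ℤ)
    (hk : 1 ≤ k) (hl0 : 0 ≤ l) (hl : l ≤ 2 * k - 1)
    (G : MG V) (hWF : G.WF) :
    (∀ E₁ E₂ : Multiset (Sym2 V),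
      E₁ ≤ G.edges → MG.Sparse k l (⟨G.verts, E₁⟩ : MG V) →
      (∀ E' : Multiset (Sym2 V), E' ≤ G.edges →
        MG.Sparse k l (⟨G.verts, E'⟩ : MG V) → E₁ ≤ E' → E' = E₁) →
      E₂ ≤ G.edges → MG.Sparse k l (⟨G.verts, E₂⟩ : MG V) →
      (∀ E' : Multiset (Sym2 V), E' ≤ G.edges →
        MG.Sparse k l (⟨G.verts, E'⟩ : MG V) → E₂ ≤ E' → E' = E₂) →
      Multiset.card E₁ = Multiset.card E₂) ∧
    (∀ L : List (Sym2 V), (L : Multiset (Sym2 V)) = G.edges →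
      Multiset.card G.edges - Multiset.card (addEdges k l G.verts L) =
        sInf {n : ℕ | ∃ F : Multiset (Sym2 V), F ≤ G.edges ∧
          MG.Sparse k l (⟨G.verts, G.edges - F⟩ : MG V) ∧ Multiset.card F = n}) := by
  have max_of : ∀ E₁ : Multiset (Sym2 V), E₁ ≤ G.edges →
      (∀ E' : Multiset (Sym2 V), E' ≤ G.edges →
        MG.Sparse k l (⟨G.verts, E'⟩ : MG V) → E₁ ≤ E' → E' = E₁) →
      ∀ e, E₁.count e < G.edges.count e → ¬ MG.Sparse k l (⟨G.verts, e ::ₘ E₁⟩ : MG V) := by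
    intro E₁ h1 hm e he hs
    have hle : e ::ₘ E₁ ≤ G.edges := by
      rw [Multiset.le_iff_count]
      intro x
      by_cases hx : x = e
      · subst hx
        rw [Multiset.count_cons_self]
        exact he
      · rw [Multiset.count_cons_of_ne hx]
        exact Multiset.count_le_of_le x h1
    have := congrArg Multiset.card (hm _ hle hs (Multiset.le_cons_self _ _))
    simp at this
  refine ⟨?_, ?_⟩
  · intro E₁ E₂ h1 s1 m1 h2 s2 m2
    exact le_antisymm (MGaux.key hWF.1 h2 s2 (max_of _ h2 m2) h1 s1)
      (MGaux.key hWF.1 h1 s1 (max_of _ h1 m1) h2 s2)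
  · intro L hL
    have s0 : MG.Sparse k l (⟨G.verts, 0⟩ : MG V) := by
      rw [MGaux.sparse_iff]
      intro S _ hS
      have : (2 : ℤ) ≤ S.card := by exact_mod_cast hS
      simp only [MGaux.ic, Multiset.filter_zero, Multiset.card_zero, Nat.cast_zero]
      nlinarith
    obtain ⟨-, r1, r2, r3⟩ := MGaux.fold_inv k l G.verts L 0 s0 (addEdges k l G.verts L) rfl
    rw [zero_add, hL] at r1 r3
    apply le_antisymm
    · apply le_csInf
      · refine ⟨_, G.edges, le_rfl, ?_, rfl⟩
        rw [tsub_self]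
        exact s0
      · rintro n ⟨F, hF, hs, rfl⟩
        have := MGaux.key hWF.1 r1 r2 r3 (tsub_le_self) hs
        rw [Multiset.card_sub hF] at this
        omega
    · apply Nat.sInf_le
      refine ⟨G.edges - addEdges k l G.verts L, tsub_le_self, ?_, Multiset.card_sub r1⟩
      rw [tsub_tsub_cancel_of_le r1]
      exact r2
end

section
/- (Proposition 3.1.) Let k, l be integers with k ≤ l < 2k and k ≥ 1. Let H = (V, E) be a (k,l)-sparse multigraph with distinct vertices A, B ∈ V, and let e be an edge joining two vertices of V such that H' = (V, E ∪ {e}) is not (k,l)-sparse. Then r_AB(H) = r_AB(H'). -/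
theorem MG.IsSubgraph.trans' {V : Type*} {a b c : MG V} [DecidableEq V]
    (h1 : a.IsSubgraph b) (h2 : b.IsSubgraph c) : a.IsSubgraph c :=
  ⟨h1.1.trans h2.1, h1.2.1.trans h2.2.1, h1.2.2⟩

theorem MG.Sparse.sub {V : Type*} {a b : MG V} [DecidableEq V] {k l : ℤ}
    (h1 : a.IsSubgraph b) (h2 : MG.Sparse k l b) : MG.Sparse k l a :=
  fun g hg hc => h2 g (hg.trans' h1) hc

/-- Proposition 3.1: if `H` is `(k,l)`-sparse (`k ≤ l < 2k`, `k ≥ 1`) with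
distinct vertices `A, B`, and adding an edge `e` makes it non-sparse, then
`r_AB(H) = r_AB(H')` where `H'` is `H` with the extra edge `e`. -/
theorem rAB_add_redundant_edge {V : Type*} [DecidableEq V] (k l : ℤ)
    (hk : 1 ≤ k) (hkl : k ≤ l) (hl2k : l < 2 * k)
    (H : MG V) (hWF : H.WF) (hsp : MG.Sparse k l H)
    (A B : V) (hA : A ∈ H.verts) (hB : B ∈ H.verts) (hAB : A ≠ B)
    (e : Sym2 V) (he : ¬ e.IsDiag) (heV : e ∈ H.verts.sym2)
    (hred : ¬ MG.Sparse k l (⟨H.verts, e ::ₘ H.edges⟩ : MG V)) :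
    MG.rAB k l H A B = MG.rAB k l (⟨H.verts, e ::ₘ H.edges⟩ : MG V) A B := by
  have hHH : H.IsSubgraph H := ⟨subset_rfl, le_rfl, hWF.2⟩
  have hHH' : H.IsSubgraph (⟨H.verts, e ::ₘ H.edges⟩ : MG V) :=
    ⟨subset_rfl, Multiset.le_cons_self _ _, hWF.2⟩
  -- tight subgraph
  have htight : ∃ (T : Finset V) (F : Multiset (Sym2 V)), T ⊆ H.verts ∧ F ≤ H.edges ∧
      (∀ f ∈ F, f ∈ T.sym2) ∧ e ∈ T.sym2 ∧ k * T.card - l ≤ (Multiset.card F : ℤ) := by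
    unfold MG.Sparse at hred
    push Not at hred
    obtain ⟨G, hG, hc, hlt⟩ := hred
    by_cases hm : e ∈ G.edges
    · refine ⟨G.verts, G.edges.erase e, hG.1, ?_, ?_, hG.2.2 e hm, ?_⟩
      · exact Multiset.erase_le_iff_le_cons.2 hG.2.1
      · exact fun f hf => hG.2.2 f (Multiset.mem_of_mem_erase hf)
      · have := Multiset.card_erase_add_one hm
        omega
    · have hG' : G.IsSubgraph H := ⟨hG.1, (Multiset.le_cons_of_notMem hm).1 hG.2.1, hG.2.2⟩
      have := hsp G hG' hc
      omega
  obtain ⟨T, F, hT, hF, hFT, heT, htc⟩ := htight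
  have key : ∀ h : MG V, h.IsSubgraph (⟨H.verts, e ::ₘ H.edges⟩ : MG V) → MG.Sparse k l h →
      A ∈ h.verts → B ∈ h.verts → ∃ g : MG V, g.IsSubgraph H ∧ MG.Sparse k l g ∧
        A ∈ g.verts ∧ B ∈ g.verts ∧ (Multiset.card h.edges : ℤ) - k * h.verts.card ≤
          (Multiset.card g.edges : ℤ) - k * g.verts.card := by
    intro h hh hs ha hb
    by_cases hm : e ∈ h.edges
    · set E0 := h.edges.erase e with hE0
      have hE : e ::ₘ E0 = h.edges := Multiset.cons_erase hm
      have hE0H : E0 ≤ H.edges := Multiset.erase_le_iff_le_cons.2 hh.2.1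
      have hE0S : ∀ f ∈ E0, f ∈ h.verts.sym2 :=
        fun f hf => hh.2.2 f (Multiset.mem_of_mem_erase hf)
      have heS := hh.2.2 e hm
      have hg : (⟨h.verts ∪ T, E0 ∪ F⟩ : MG V).IsSubgraph H := by
        refine ⟨Finset.union_subset hh.1 hT, Multiset.union_le hE0H hF, ?_⟩
        intro f hf
        rcases Multiset.mem_union.1 hf with hf | hf
        · exact Finset.sym2_mono Finset.subset_union_left (hE0S f hf)
        · exact Finset.sym2_mono Finset.subset_union_right (hFT f hf)
      have hi : ∀ f, f ∈ h.verts.sym2 → f ∈ T.sym2 → f ∈ (h.verts ∩ T).sym2 := by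
        intro f h1 h2
        rw [Finset.mem_sym2_iff] at *
        exact fun a ha => Finset.mem_inter.2 ⟨h1 a ha, h2 a ha⟩
      have hc : 1 < (h.verts ∩ T).card := by
        have h1 := hi e heS heT
        clear_value E0
        induction e with
        | _ x y =>
          rw [Finset.mk_mem_sym2_iff] at h1
          exact Finset.one_lt_card.2 ⟨x, h1.1, y, h1.2, by simpa using he⟩
      have h1 := hs ⟨h.verts ∩ T, e ::ₘ (E0 ∩ F)⟩ ⟨Finset.inter_subset_left, by
          change e ::ₘ (E0 ∩ F) ≤ h.edges
          rw [← hE]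
          exact (Multiset.cons_le_cons_iff e).2 (Multiset.inter_le_left), by
          intro f hf
          rcases Multiset.mem_cons.1 hf with rfl | hf
          · exact hi _ heS heT
          · rw [Multiset.mem_inter] at hf
            exact hi _ (hE0S f hf.1) (hFT f hf.2)⟩ hc
      refine ⟨_, hg, MG.Sparse.sub hg hsp, Finset.mem_union_left _ ha,
        Finset.mem_union_left _ hb, ?_⟩
      have h2 : Multiset.card (E0 ∪ F) + Multiset.card (E0 ∩ F)
          = Multiset.card E0 + Multiset.card F := by
        rw [← Multiset.card_add, Multiset.union_add_inter, Multiset.card_add]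
      have h3 := Finset.card_union_add_card_inter h.verts T
      have h4 : Multiset.card h.edges = Multiset.card E0 + 1 := by
        rw [← hE, Multiset.card_cons]
      rw [Multiset.card_cons] at h1
      zify at h2 h3 h4
      push_cast at h1
      have h5 : k * ((h.verts ∪ T).card : ℤ) + k * (h.verts ∩ T).card
        = k * h.verts.card + k * T.card := by rw [← mul_add, h3, mul_add]
      dsimp only at h1 ⊢
      linarith
    · have hg : h.IsSubgraph H := ⟨hh.1, (Multiset.le_cons_of_notMem hm).1 hh.2.1, hh.2.2⟩
      exact ⟨h, hg, hs, ha, hb, le_rfl⟩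
  have hbdd : ∀ G : MG V, BddAbove {z : ℤ | ∃ h : MG V, h.IsSubgraph G ∧ MG.Sparse k l h ∧
    A ∈ h.verts ∧ B ∈ h.verts ∧ z = (Multiset.card h.edges : ℤ) - k * h.verts.card} := by
    rintro G
    refine ⟨Multiset.card G.edges, ?_⟩
    rintro z ⟨h, hh, -, -, -, rfl⟩
    have h1 : (Multiset.card h.edges : ℤ) ≤ Multiset.card G.edges := by
      exact_mod_cast Multiset.card_le_card hh.2.1
    have h2 : 0 ≤ k * (h.verts.card : ℤ) := by positivity
    linarith
  unfold MG.rAB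
  apply le_antisymm
  · refine csSup_le_csSup (hbdd _) ⟨_, H, hHH, hsp, hA, hB, rfl⟩ ?_
    rintro z ⟨h, hh, h2⟩
    exact ⟨h, hh.trans' hHH', h2⟩
  · refine csSup_le ⟨_, H, hHH', hsp, hA, hB, rfl⟩ ?_
    rintro z ⟨h, hh, hs, ha, hb, rfl⟩
    obtain ⟨g, hg, hgs, hga, hgb, hle⟩ := key h hh hs ha hb
    exact hle.trans (le_csSup (hbdd _) ⟨g, hg, hgs, hga, hgb, rfl⟩)
end

section
/- (Lemma 3.3.) Let k, l be integers with k ≤ l < 2k and k ≥ 1. Let G = (V, E) be a multigraph, V_H ⊆ V with distinct A, B ∈ V_H, and suppose the induced subgraph H = (V_H, E_H) satisfies the renormalizability condition with respect to A, B. Let g̃ = (ṽ, ẽ) be a subgraph of R(G), and let m̃ be the number of edges of its renormalized part (its A–B edges coming from the renormalization). Then there exists a subgraph g of G such that: (i) R(g) = g̃; (ii) if A ∉ ṽ or B ∉ ṽ, then the intersection h = (V_h, E_h) of g with H has no edges; (iii) if A ∈ ṽ and B ∈ ṽ, then h = (V_h, E_h) is (k,l)-sparse and m̃ = |E_h| −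 k|V_h| + 2k. -/
theorem MG.bdd_aux {V : Type*} [DecidableEq V] (k l : ℤ) (H : MG V) (A B : V) (hAB : A ≠ B) :
    ∀ z ∈ {z : ℤ | ∃ h : MG V, h.IsSubgraph H ∧ MG.Sparse k l h ∧
    A ∈ h.verts ∧ B ∈ h.verts ∧ z = (Multiset.card h.edges : ℤ) - k * h.verts.card}, z ≤ -l := by
  rintro z ⟨h, hs, hsp, ha, hb, rfl⟩
  have := hsp h ⟨Finset.Subset.refl _, le_refl _, hs.2.2⟩
    (Finset.one_lt_card.2 ⟨A, ha, B, hb, hAB⟩)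
  linarith

theorem MG.sub_trans {V : Type*} [DecidableEq V] {a b c : MG V}
    (h1 : a.IsSubgraph b) (h2 : b.IsSubgraph c) : a.IsSubgraph c :=
  ⟨h1.1.trans h2.1, h1.2.1.trans h2.2.1, h1.2.2⟩

theorem MG.exists_max {V : Type*} [DecidableEq V] (k l : ℤ)
    (hl2k : l < 2 * k) (H : MG V) (A B : V) (hA : A ∈ H.verts) (hB : B ∈ H.verts)
    (hAB : A ≠ B) (mt : ℕ) (hmt : (mt : ℤ) ≤ MG.MAB k l H A B) :
    ∃ h : MG V, h.IsSubgraph H ∧ MG.Sparse k l h ∧ A ∈ h.verts ∧ B ∈ h.verts ∧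
      (mt : ℤ) ≤ (Multiset.card h.edges : ℤ) - k * h.verts.card + 2 * k := by
  have h0 : ∃ h : MG V, h.IsSubgraph H ∧ MG.Sparse k l h ∧
    A ∈ h.verts ∧ B ∈ h.verts ∧ -2 * k = (Multiset.card h.edges : ℤ) - k * h.verts.card := by
    refine ⟨⟨{A, B}, 0⟩, ⟨?_, by simp, by simp⟩, ?_, by simp, by simp, ?_⟩
    · intro x hx
      simp at hx
      rcases hx with rfl | rfl <;> assumption
    · rintro g ⟨h1, h2, h3⟩ hc
      have e : g.edges = 0 := by simpa using h2
      have h4 := Finset.card_le_card h1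
      rw [Finset.card_pair hAB] at h4
      have h5 : g.verts.card = 2 := by omega
      rw [e, h5]
      simp
      linarith
    · simp [Finset.card_pair hAB]
      ring
  have hb : BddAbove {z : ℤ | ∃ h : MG V, h.IsSubgraph H ∧ MG.Sparse k l h ∧
    A ∈ h.verts ∧ B ∈ h.verts ∧ z = (Multiset.card h.edges : ℤ) - k * h.verts.card} :=
    ⟨-l, MG.bdd_aux k l H A B hAB⟩
  have hge : -2 * k ≤ MG.rAB k l H A B := le_csSup hb h0
  obtain ⟨h, h1, h2, h3, h4, h5⟩ := Int.csSup_mem ⟨_, h0⟩ hb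
  refine ⟨h, h1, h2, h3, h4, ?_⟩
  change MG.rAB k l H A B = _ at h5
  rw [← h5]
  refine hmt.trans ?_
  unfold MG.MAB
  exact max_le le_rfl (by linarith)

theorem MG.exists_exact {V : Type*} [DecidableEq V] (k l : ℤ)
    (hk : 1 ≤ k) (hl2k : l < 2 * k) (H : MG V) (A B : V) (hA : A ∈ H.verts) (hB : B ∈ H.verts)
    (hAB : A ≠ B) (mt : ℕ) (hmt : (mt : ℤ) ≤ MG.MAB k l H A B) :
    ∃ h : MG V, h.IsSubgraph H ∧ MG.Sparse k l h ∧ A ∈ h.verts ∧ B ∈ h.verts ∧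
      (mt : ℤ) = (Multiset.card h.edges : ℤ) - k * h.verts.card + 2 * k ∧
      MG.MAB k l h A B = mt := by
  classical
  have hex := MG.exists_max k l hl2k H A B hA hB hAB mt hmt
  have hex' : ∃ n : ℕ, ∃ h : MG V, (h.IsSubgraph H ∧ MG.Sparse k l h ∧ A ∈ h.verts ∧ B ∈ h.verts ∧
      (mt : ℤ) ≤ (Multiset.card h.edges : ℤ) - k * h.verts.card + 2 * k) ∧
      Multiset.card h.edges + h.verts.card = n := by
    obtain ⟨h, hh⟩ := hex
    exact ⟨_, h, hh, rfl⟩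
  obtain ⟨h, ⟨h1, h2, h3, h4, h5⟩, h6⟩ := Nat.find_spec hex'
  have hmin : ∀ h' : MG V, h'.IsSubgraph h →
      (mt : ℤ) ≤ (Multiset.card h'.edges : ℤ) - k * h'.verts.card + 2 * k →
      A ∈ h'.verts → B ∈ h'.verts →
      Multiset.card h.edges + h.verts.card ≤ Multiset.card h'.edges + h'.verts.card := by
    intro h' s1 s2 s3 s4
    rw [h6]
    exact Nat.find_min' hex' ⟨h', ⟨MG.sub_trans s1 h1,
      fun g hg hc => h2 g (MG.sub_trans hg s1) hc, s3, s4, s2⟩, rfl⟩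
  have hc2 : 1 < h.verts.card := Finset.one_lt_card.2 ⟨A, h3, B, h4, hAB⟩
  have heq : (mt : ℤ) = (Multiset.card h.edges : ℤ) - k * h.verts.card + 2 * k := by
    by_contra hne
    have hlt := lt_of_le_of_ne h5 hne
    have hpos : 0 < Multiset.card h.edges := by
      have : (2 : ℤ) ≤ h.verts.card := by exact_mod_cast hc2
      have h7 : 0 ≤ k * ((h.verts.card : ℤ) - 2) := mul_nonneg (by linarith) (by linarith)
      have : (0 : ℤ) ≤ mt := by positivity
      have : (0 : ℤ) < Multiset.card h.edges := by linarith
      exact_mod_cast this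
    obtain ⟨e, he⟩ := Multiset.card_pos_iff_exists_mem.1 hpos
    have hce := Multiset.card_erase_add_one he
    have := hmin ⟨h.verts, h.edges.erase e⟩ ⟨Finset.Subset.refl _, Multiset.erase_le _ _,
      fun x hx => h1.2.2 x (Multiset.mem_of_mem_erase hx)⟩ (by
        simp only
        have : (Multiset.card (h.edges.erase e) : ℤ) + 1 = Multiset.card h.edges := by
          exact_mod_cast hce
        linarith) h3 h4
    simp only at this
    omega
  refine ⟨h, h1, h2, h3, h4, heq, ?_⟩
  have hr : MG.rAB k l h A B = mt - 2 * k := by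
    unfold MG.rAB
    apply le_antisymm
    · apply csSup_le
      · exact ⟨_, h, ⟨Finset.Subset.refl _, le_refl _, h1.2.2⟩, h2, h3, h4, rfl⟩
      · rintro z ⟨h', s1, s2, s3, s4, rfl⟩
        by_contra hlt
        push Not at hlt
        have h7 := hmin h' s1 (by linarith) s3 s4
        have h8 := Finset.card_le_card s1.1
        have h9 := Multiset.card_le_card s1.2.1
        have e1 : h'.verts.card = h.verts.card := by omega
        have e2 : Multiset.card h'.edges = Multiset.card h.edges := by omega
        rw [e1, e2] at hlt
        linarith
    · apply le_csSup ⟨-l, MG.bdd_aux k l h A B hAB⟩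
      exact ⟨h, ⟨Finset.Subset.refl _, le_refl _, h1.2.2⟩, h2, h3, h4, by linarith⟩
  unfold MG.MAB
  rw [hr]
  simp

/-- Lemma 3.3: let `H`, the subgraph of `G` induced by `VH`, satisfy the
renormalizability condition w.r.t. `A, B`. Any subgraph `g̃` of `R(G)` consists of a
sub-multiset `ē` of the unrenormalized edges of `G` together with `m̃` of the renormalized
`A`–`B` edges. Then there is a subgraph `g` of `G` with: (i) `R(g) = g̃`; (ii) if `A ∉ ṽ`
or `B ∉ ṽ` then the intersection `h` of `g` with `H` has no edges; (iii) if `A ∈ ṽ` and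
`B ∈ ṽ` then `h = (V_h, E_h)` is `(k,l)`-sparse and `m̃ = |E_h| - k|V_h| + 2k`. -/
theorem renorm_subgraph_lift {V : Type*} [DecidableEq V] (k l : ℤ)
    (hk : 1 ≤ k) (hkl : k ≤ l) (hl2k : l < 2 * k)
    (G : MG V) (hWF : G.WF) (VH : Finset V) (hVH : VH ⊆ G.verts)
    (A B : V) (hA : A ∈ VH) (hB : B ∈ VH) (hAB : A ≠ B)
    (hren : MG.RenormCond G VH A B)
    (vt : Finset V) (ebar : Multiset (Sym2 V)) (mt : ℕ)
    (hebar : ebar ≤ G.edges.filter (fun e => e ∉ VH.sym2))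
    (hmt : (mt : ℤ) ≤ MG.MAB k l (G.induced VH) A B)
    (hsub : (⟨vt, ebar + Multiset.replicate mt s(A, B)⟩ : MG V).IsSubgraph
      (MG.renormG k l G VH A B)) :
    ∃ g : MG V, g.IsSubgraph G ∧
      MG.renormSub k l g VH A B = (⟨vt, ebar + Multiset.replicate mt s(A, B)⟩ : MG V) ∧
      ((A ∉ vt ∨ B ∉ vt) → (g.inter VH).edges = 0) ∧
      (A ∈ vt → B ∈ vt →
        MG.Sparse k l (g.inter VH) ∧
        (mt : ℤ) = (Multiset.card (g.inter VH).edges : ℤ)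
          - k * (g.inter VH).verts.card + 2 * k) := by
  have hvt : vt ⊆ (G.verts \ VH) ∪ {A, B} := hsub.1
  have hev : ∀ e ∈ ebar + Multiset.replicate mt s(A, B), e ∈ vt.sym2 := hsub.2.2
  have hvtG : vt ⊆ G.verts := by
    intro x hx
    have := hvt hx
    simp only [Finset.mem_union, Finset.mem_sdiff, Finset.mem_insert, Finset.mem_singleton] at this
    rcases this with h | rfl | rfl
    · exact h.1
    · exact hVH hA
    · exact hVH hB
  have hnot : ∀ e ∈ ebar, e ∉ VH.sym2 := fun e he =>
    (Multiset.mem_filter.1 (Multiset.mem_of_le hebar he)).2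
  have hf1 : ebar.filter (fun e => e ∉ VH.sym2) = ebar := Multiset.filter_eq_self.2 hnot
  have hf2 : ebar.filter (· ∈ VH.sym2) = 0 := Multiset.filter_eq_nil.2 hnot
  by_cases hc : A ∈ vt ∧ B ∈ vt
  · obtain ⟨hAv, hBv⟩ := hc
    obtain ⟨h, h1, h2, h3, h4, h5, h6⟩ :=
      MG.exists_exact k l hk hl2k (G.induced VH) A B hA hB hAB mt hmt
    have hhV : h.verts ⊆ VH := h1.1
    have hhE : h.edges ≤ G.edges.filter (· ∈ VH.sym2) := h1.2.1
    have hin : ∀ e ∈ h.edges, e ∈ VH.sym2 := fun e he =>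
      (Multiset.mem_filter.1 (Multiset.mem_of_le hhE he)).2
    have hg1 : h.edges.filter (· ∈ VH.sym2) = h.edges := Multiset.filter_eq_self.2 hin
    have hg2 : h.edges.filter (fun e => e ∉ VH.sym2) = 0 :=
      Multiset.filter_eq_nil.2 (fun e he hn => hn (hin e he))
    have hint : (⟨vt ∪ h.verts, ebar + h.edges⟩ : MG V).inter VH = h := by
      have ev : (vt ∪ h.verts) ∩ VH = h.verts := by
        ext x
        constructor
        · intro hx
          have hx1 := Finset.mem_inter.1 hx
          rcases Finset.mem_union.1 hx1.1 with hx2 | hx2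
          · have := hvt hx2
            simp only [Finset.mem_union, Finset.mem_sdiff, Finset.mem_insert,
              Finset.mem_singleton] at this
            rcases this with h | rfl | rfl
            · exact absurd hx1.2 h.2
            · exact h3
            · exact h4
          · exact hx2
        · intro hx
          exact Finset.mem_inter.2 ⟨Finset.mem_union_right _ hx, hhV hx⟩
      unfold MG.inter
      simp only [Multiset.filter_add, hf2, hg1, zero_add, ev]
    refine ⟨⟨vt ∪ h.verts, ebar + h.edges⟩, ⟨?_, ?_, ?_⟩, ?_, ?_, ?_⟩
    · exact Finset.union_subset hvtG (hhV.trans hVH)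
    · have := add_le_add hebar hhE
      rw [add_comm (Multiset.filter _ _), Multiset.filter_add_not] at this
      exact this
    · intro e he
      rcases Multiset.mem_add.1 he with he | he
      · exact Finset.sym2_mono Finset.subset_union_left
          (hev e (Multiset.mem_add.2 (Or.inl he)))
      · exact Finset.sym2_mono Finset.subset_union_right (h1.2.2 e he)
    · have ev : ((vt ∪ h.verts) \ VH) ∪ ((vt ∪ h.verts) ∩ {A, B}) = vt := by
        ext x
        have q1 := @hvt x
        have q2 := @hhV x
        simp only [Finset.mem_union, Finset.mem_sdiff, Finset.mem_insert, Finset.mem_inter,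
          Finset.mem_singleton] at *
        constructor
        · rintro (⟨h | h, h'⟩ | ⟨_, rfl | rfl⟩)
          · exact h
          · exact absurd (q2 h) h'
          · exact hAv
          · exact hBv
        · intro hx
          rcases q1 hx with h | h
          · exact Or.inl ⟨Or.inl hx, h.2⟩
          · exact Or.inr ⟨Or.inl hx, h⟩
      unfold MG.renormSub
      rw [hint, h6]
      simp only [Multiset.filter_add, hf1, hg2, add_zero, ev]
      rw [if_pos ⟨Finset.mem_union_left _ hAv, Finset.mem_union_left _ hBv⟩]
      simp
    · rintro (hn | hn)
      · exact absurd hAv hn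
      · exact absurd hBv hn
    · intro _ _
      rw [hint]
      exact ⟨h2, h5⟩
  · have hm0 : mt = 0 := by
      by_contra hne
      have := hev s(A, B) (Multiset.mem_add.2 (Or.inr (Multiset.mem_replicate.2 ⟨hne, rfl⟩)))
      rw [Finset.mk_mem_sym2_iff] at this
      exact hc this
    subst hm0
    refine ⟨⟨vt, ebar⟩, ⟨hvtG, hebar.trans (Multiset.filter_le _ _), ?_⟩, ?_, ?_, ?_⟩
    · exact fun e he => hev e (Multiset.mem_add.2 (Or.inl he))
    · have ev : (vt \ VH) ∪ (vt ∩ {A, B}) = vt := by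
        ext x
        have q1 := @hvt x
        simp only [Finset.mem_union, Finset.mem_sdiff, Finset.mem_insert, Finset.mem_inter,
          Finset.mem_singleton] at *
        tauto
      unfold MG.renormSub
      simp only [hf1, ev]
      rw [if_neg hc]
      simp
    · intro _
      exact hf2
    · intro a b
      exact absurd ⟨a, b⟩ hc
end

section
/- (Lemma 3.4.) Let k, l be integers with k ≤ l < 2k and k ≥ 1. Let G = (V, E) be a multigraph, V_H ⊆ V with distinct A, B ∈ V_H, and suppose the induced subgraph H = (V_H, E_H) satisfies the renormalizability condition with respect to A, B. Let g be a (k,l)-redundant subgraph of G that is minimal, in the sense that no proper subgraph of g is (k,l)-redundant. Then at least one of the following holds: (i) g is a subgraph of H; (ii) R(g) is a (k,l)-redundant subgraph of R(G). -/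
theorem MG.rAB_bdd {V : Type*} [DecidableEq V] (k l : ℤ) (H : MG V) (A B : V) (hAB : A ≠ B) :
    BddAbove {z : ℤ | ∃ h : MG V, h.IsSubgraph H ∧ MG.Sparse k l h ∧
      A ∈ h.verts ∧ B ∈ h.verts ∧
      z = (Multiset.card h.edges : ℤ) - k * h.verts.card} := by
  refine ⟨-l, ?_⟩
  rintro z ⟨h, hs, hsp, ha, hb, rfl⟩
  have := hsp h ⟨Finset.Subset.refl _, le_refl _, hs.2.2⟩
    (Finset.one_lt_card.2 ⟨A, ha, B, hb, hAB⟩)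
  linarith

theorem MG.card_edges_zero {V : Type*} [DecidableEq V] (g : MG V)
    (h1 : ∀ e ∈ g.edges, ¬ e.IsDiag) (h2 : ∀ e ∈ g.edges, e ∈ g.verts.sym2)
    (h : g.verts.card ≤ 1) : Multiset.card g.edges = 0 := by
  rw [Multiset.card_eq_zero, Multiset.eq_zero_iff_forall_notMem]
  intro e he
  have a1 := h1 e he
  have a2 := h2 e he
  induction e using Sym2.ind with
  | _ x y =>
    rw [Finset.mk_mem_sym2_iff] at a2
    exact a1 (by simpa using Finset.card_le_one.1 h x a2.1 y a2.2)

/-- Lemma 3.4: let `H`, the subgraph of `G` induced by `VH`, satisfy the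
renormalizability condition w.r.t. `A, B`, and let `g` be a minimal `(k,l)`-redundant
subgraph of `G`. Then either `g` is a subgraph of `H`, or `R(g)` is a `(k,l)`-redundant
subgraph of `R(G)`. -/
theorem minimal_redundant_renorm {V : Type*} [DecidableEq V] (k l : ℤ)
    (hk : 1 ≤ k) (hkl : k ≤ l) (hl2k : l < 2 * k)
    (G : MG V) (hWF : G.WF) (VH : Finset V) (hVH : VH ⊆ G.verts)
    (A B : V) (hA : A ∈ VH) (hB : B ∈ VH) (hAB : A ≠ B)
    (hren : MG.RenormCond G VH A B)
    (g : MG V) (hg : g.IsSubgraph G) (hgred : MG.Redundant k l g)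
    (hmin : ∀ g' : MG V, g'.IsSubgraph g → g' ≠ g → MG.Sparse k l g') :
    g.IsSubgraph (G.induced VH) ∨
      ((MG.renormSub k l g VH A B).IsSubgraph (MG.renormG k l G VH A B) ∧
        MG.Redundant k l (MG.renormSub k l g VH A B)) := by
  by_cases hsub : g.verts ⊆ VH
  · left
    refine ⟨hsub, ?_, hg.2.2⟩
    rw [MG.induced, Multiset.le_filter]
    exact ⟨hg.2.1, fun e he => Finset.sym2_mono hsub (hg.2.2 e he)⟩
  right
  obtain ⟨w, hwg, hwV⟩ := Finset.not_subset.1 hsub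
  -- g itself violates the bound
  have hgm : 1 < g.verts.card ∧ k * g.verts.card - l < (Multiset.card g.edges : ℤ) := by
    unfold MG.Redundant MG.Sparse at hgred
    push Not at hgred
    obtain ⟨g', hs, hc, hm⟩ := hgred
    by_cases hgg : g' = g
    · subst hgg; exact ⟨hc, hm⟩
    · have := hmin g' hs hgg g' ⟨Finset.Subset.refl _, le_refl _, hs.2.2⟩ hc
      omega
  obtain ⟨hn1, hm⟩ := hgm
  have hloop : ∀ e ∈ g.edges, ¬ e.IsDiag := fun e he =>
    hWF.1 e (Multiset.mem_of_le hg.2.1 he)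
  have hhe : ∀ e ∈ (g.inter VH).edges, e ∈ (g.inter VH).verts.sym2 := by
    intro e he
    simp only [MG.inter, Multiset.mem_filter] at he ⊢
    have a2 := hg.2.2 e he.1
    have a3 := he.2
    rw [Finset.mem_sym2_iff] at *
    intro a ha
    exact Finset.mem_inter.2 ⟨a2 a ha, a3 a ha⟩
  have hhg : (g.inter VH).IsSubgraph g :=
    ⟨Finset.inter_subset_left, Multiset.filter_le _ _, hhe⟩
  have hhsp : MG.Sparse k l (g.inter VH) := by
    apply hmin _ hhg
    intro h
    rw [← h] at hwg
    exact hwV (Finset.mem_inter.1 hwg).2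
  have hhm : 1 < (g.inter VH).verts.card →
      (Multiset.card (g.inter VH).edges : ℤ) ≤ k * (g.inter VH).verts.card - l :=
    hhsp _ ⟨Finset.Subset.refl _, le_refl _, hhe⟩
  have hhm0 : (g.inter VH).verts.card ≤ 1 → Multiset.card (g.inter VH).edges = 0 := by
    apply MG.card_edges_zero _ _ hhe
    intro e he
    exact hloop e (Multiset.mem_filter.1 he).1
  have hcut : ∀ e ∈ g.edges, e ∉ VH.sym2 → ∀ v ∈ e, v ∈ VH → v = A ∨ v = B := by
    intro e he heV v hv hvV
    rw [Finset.mem_sym2_iff] at heV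
    push Not at heV
    obtain ⟨u, hu, huV⟩ := heV
    have huv : u ≠ v := by rintro rfl; exact huV hvV
    have he' : e = s(u, v) := (Sym2.mem_and_mem_iff huv).1 ⟨hu, hv⟩
    have := hren e (Multiset.mem_of_le hg.2.1 he) ⟨v, hv, hvV⟩ ⟨u, hu, huV⟩
    rw [he'] at this
    simp only [Sym2.mem_iff] at this
    rcases this with (h | h) | (h | h)
    · exact absurd (h ▸ hA) huV
    · exact Or.inl h.symm
    · exact absurd (h ▸ hB) huV
    · exact Or.inr h.symm
  have hRe : ∀ e ∈ (MG.renormSub k l g VH A B).edges,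
      e ∈ (MG.renormSub k l g VH A B).verts.sym2 := by
    intro e he
    simp only [MG.renormSub, Multiset.mem_add, Multiset.mem_filter] at he ⊢
    rcases he with ⟨he, heV⟩ | he
    · rw [Finset.mem_sym2_iff]
      intro v hv
      have hvg := Finset.mem_sym2_iff.1 (hg.2.2 e he) v hv
      by_cases hvV : v ∈ VH
      · have := hcut e he heV v hv hvV
        simp [hvg, this]
      · simp [hvg, hvV]
    · split_ifs at he with hc
      · rw [Multiset.eq_of_mem_replicate he, Finset.mk_mem_sym2_iff]
        simp [hc.1, hc.2]
      · simp at he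
  refine ⟨⟨?_, ?_, hRe⟩, ?_⟩
  · intro v hv
    simp only [MG.renormSub, MG.renormG, Finset.mem_union, Finset.mem_sdiff,
      Finset.mem_inter] at hv ⊢
    rcases hv with ⟨h1, h2⟩ | ⟨h1, h2⟩
    · exact Or.inl ⟨hg.1 h1, h2⟩
    · exact Or.inr h2
  · simp only [MG.renormSub, MG.renormG]
    refine add_le_add (Multiset.filter_le_filter _ hg.2.1) ?_
    split_ifs with hc
    · rw [Multiset.replicate_le_replicate]
      apply Int.toNat_le_toNat
      unfold MG.MAB
      apply max_le_max _ (le_refl _)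
      apply add_le_add _ (le_refl _)
      unfold MG.rAB
      apply csSup_le_csSup (MG.rAB_bdd k l _ A B hAB)
      · exact ⟨_, g.inter VH, ⟨Finset.Subset.refl _, le_refl _, hhe⟩, hhsp,
          Finset.mem_inter.2 ⟨hc.1, hA⟩, Finset.mem_inter.2 ⟨hc.2, hB⟩, rfl⟩
      · rintro z ⟨h, hs, h3⟩
        refine ⟨h, ⟨hs.1.trans Finset.inter_subset_right, hs.2.1.trans ?_, hs.2.2⟩, h3⟩
        exact Multiset.filter_le_filter _ hg.2.1
    · exact Multiset.zero_le _
  · intro hsp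
    have key := hsp _ ⟨Finset.Subset.refl _, le_refl _, hRe⟩
    have hEsplit : Multiset.card (g.edges.filter (fun e => e ∉ VH.sym2)) +
        Multiset.card (g.inter VH).edges = Multiset.card g.edges := by
      rw [← Multiset.card_add, add_comm]
      exact congrArg _ (Multiset.filter_add_not (fun e => e ∈ VH.sym2) g.edges)
    have hVsplit : (g.verts \ VH).card + (g.inter VH).verts.card = g.verts.card :=
      Finset.card_sdiff_add_card_inter _ _
    have hRv : (MG.renormSub k l g VH A B).verts.card =
        (g.verts \ VH).card + (g.verts ∩ {A, B}).card := by
      apply Finset.card_union_of_disjoint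
      rw [Finset.disjoint_left]
      intro v h1 h2
      simp only [Finset.mem_sdiff, Finset.mem_inter, Finset.mem_insert,
        Finset.mem_singleton] at h1 h2
      rcases h2.2 with rfl | rfl
      · exact h1.2 hA
      · exact h1.2 hB
    have hout : 1 ≤ (g.verts \ VH).card :=
      Finset.card_pos.2 ⟨w, Finset.mem_sdiff.2 ⟨hwg, hwV⟩⟩
    have hRE : Multiset.card (MG.renormSub k l g VH A B).edges =
        Multiset.card (g.edges.filter (fun e => e ∉ VH.sym2)) +
        (if A ∈ g.verts ∧ B ∈ g.verts then (MG.MAB k l (g.inter VH) A B).toNat else 0) := by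
      simp only [MG.renormSub, Multiset.card_add]
      split_ifs <;> simp
    have hh' : 1 ≤ (g.inter VH).verts.card →
        (Multiset.card (g.inter VH).edges : ℤ) ≤ k * (g.inter VH).verts.card - k := by
      intro h
      by_cases h2 : 1 < (g.inter VH).verts.card
      · have := hhm h2; linarith
      · have h3 : (g.inter VH).verts.card = 1 := by omega
        rw [hhm0 h3.le, h3]; simp
    have hRl : (MG.renormSub k l g VH A B).verts.card ≤ 1 → ¬ (A ∈ g.verts ∧ B ∈ g.verts) →
        Multiset.card (MG.renormSub k l g VH A B).edges = 0 := by
      intro h hc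
      apply MG.card_edges_zero _ _ hRe h
      intro e he
      simp only [MG.renormSub, if_neg hc, add_zero] at he
      exact hloop e (Multiset.mem_filter.1 he).1
    by_cases hc : A ∈ g.verts ∧ B ∈ g.verts
    · have hi : (g.verts ∩ {A, B}).card = 2 := by
        rw [Finset.inter_eq_right.2, Finset.card_pair hAB]
        simp [Finset.insert_subset_iff, hc.1, hc.2]
      have hM : (Multiset.card (g.inter VH).edges : ℤ) - k * (g.inter VH).verts.card + 2 * k
          ≤ MG.MAB k l (g.inter VH) A B := by
        refine le_trans ?_ (le_max_left _ _)
        apply add_le_add _ (le_refl _)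
        apply le_csSup (MG.rAB_bdd k l _ A B hAB)
        exact ⟨g.inter VH, ⟨Finset.Subset.refl _, le_refl _, hhe⟩, hhsp,
          Finset.mem_inter.2 ⟨hc.1, hA⟩, Finset.mem_inter.2 ⟨hc.2, hB⟩, rfl⟩
      have hT := Int.self_le_toNat (MG.MAB k l (g.inter VH) A B)
      have key' := key (by omega)
      rw [if_pos hc] at hRE
      rw [hRE, hRv, hi] at key'
      rw [← hEsplit, ← hVsplit] at hm
      push_cast at key' hm
      linarith
    · rw [if_neg hc, add_zero] at hRE
      by_cases hi0 : (g.verts ∩ {A, B}).card = 0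
      · by_cases hh0 : (g.inter VH).verts.card = 0
        · have := hhm0 (by omega)
          have key' := key (by omega)
          rw [hRE, hRv, hi0] at key'
          rw [← hEsplit, ← hVsplit, this, hh0] at hm
          push_cast at key' hm
          linarith
        · have h2 := hh' (by omega)
          by_cases hR1 : (MG.renormSub k l g VH A B).verts.card ≤ 1
          · have h0 := hRl hR1 hc
            have h1 : (g.verts \ VH).card = 1 := by omega
            rw [hRE] at h0
            rw [← hEsplit, ← hVsplit, h1, h0] at hm
            push_cast at hm
            linarith
          · have key' := key (by omega)
            rw [hRE, hRv, hi0] at key'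
            rw [← hEsplit, ← hVsplit] at hm
            push_cast at key' hm
            linarith
      · have hle : (g.verts ∩ {A, B}).card ≤ (g.inter VH).verts.card := by
          apply Finset.card_le_card
          apply Finset.inter_subset_inter_left
          simp [Finset.insert_subset_iff, hA, hB]
        have hi1 : (g.verts ∩ {A, B}).card ≤ 1 := by
          rw [Finset.card_le_one]
          intro x hx y hy
          simp only [Finset.mem_inter, Finset.mem_insert, Finset.mem_singleton] at hx hy
          rcases hx with ⟨hx, rfl | rfl⟩ <;> rcases hy with ⟨hy, rfl | rfl⟩ <;>
            first | rfl | exact (hc ⟨hx, hy⟩).elim | exact (hc ⟨hy, hx⟩).elim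
        have hi : (g.verts ∩ {A, B}).card = 1 := by omega
        have h2 := hh' (by omega)
        have key' := key (by omega)
        rw [hRE, hRv, hi] at key'
        rw [← hEsplit, ← hVsplit] at hm
        push_cast at key' hm
        linarith
end

section
/- (Lemma 3.5.) Let k, l be integers with k ≤ l < 2k and k ≥ 1. Let G = (V, E) be a multigraph, V_H ⊆ V with distinct A, B ∈ V_H, and suppose the induced subgraph H = (V_H, E_H) satisfies the renormalizability condition with respect to A, B. Then for every (k,l)-redundant subgraph g̃ of R(G) there exists a (k,l)-redundant subgraph g of G such that R(g) = g̃. -/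
namespace MG

lemma IsSubgraph.tr {V : Type*} [DecidableEq V] {a b c : MG V} (h : a.IsSubgraph b)
    (h' : b.IsSubgraph c) : a.IsSubgraph c :=
  ⟨h.1.trans h'.1, h.2.1.trans h'.2.1, h.2.2⟩

lemma Sparse.sub_s6 {V : Type*} [DecidableEq V] {k l : ℤ} {a b : MG V} (hb : Sparse k l b)
    (h : a.IsSubgraph b) : Sparse k l a :=
  fun c hc => hb c (hc.tr h)

lemma sparse_pair {V : Type*} [DecidableEq V] {k l : ℤ} (hk : 1 ≤ k) (hl : l < 2 * k)
    (A B : V) : Sparse k l (⟨{A, B}, 0⟩ : MG V) := by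
  intro c hc h1
  have h0 : c.edges = 0 := by simpa using hc.2.1
  rw [h0]
  have : (2 : ℤ) ≤ c.verts.card := by exact_mod_cast h1
  simp only [Multiset.card_zero, Nat.cast_zero]
  nlinarith

lemma rAB_set_bdd {V : Type*} [DecidableEq V] {k l : ℤ} (hk : 1 ≤ k) (H : MG V) (A B : V) :
    BddAbove {z : ℤ | ∃ h : MG V, h.IsSubgraph H ∧ Sparse k l h ∧
    A ∈ h.verts ∧ B ∈ h.verts ∧ z = (Multiset.card h.edges : ℤ) - k * h.verts.card} := by
  refine ⟨(Multiset.card H.edges : ℤ), ?_⟩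
  rintro z ⟨h, hs, -, -, -, rfl⟩
  have h1 : (Multiset.card h.edges : ℤ) ≤ Multiset.card H.edges := by
    exact_mod_cast Multiset.card_le_card hs.2.1
  have h2 : (0 : ℤ) ≤ h.verts.card := by positivity
  nlinarith

/-- Any number `m ≤ M_AB(H)` is realised by a sparse subgraph. -/
lemma exists_realise {V : Type*} [DecidableEq V] {k l : ℤ} (hk : 1 ≤ k) (hl : l < 2 * k)
    (H : MG V) (A B : V) (hA : A ∈ H.verts) (hB : B ∈ H.verts) (hAB : A ≠ B) (m : ℕ)
    (hm : m ≤ (MAB k l H A B).toNat) :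
    ∃ h : MG V, h.IsSubgraph H ∧ A ∈ h.verts ∧ B ∈ h.verts ∧
      (Multiset.card h.edges : ℤ) - k * h.verts.card + 2 * k = m ∧ MAB k l h A B = m := by
  classical
  set P : MG V → Prop := fun h => h.IsSubgraph H ∧ Sparse k l h ∧ A ∈ h.verts ∧ B ∈ h.verts ∧
    (m : ℤ) ≤ (Multiset.card h.edges : ℤ) - k * h.verts.card + 2 * k with hP
  -- removing an edge
  have step : ∀ h, P h →
      (m : ℤ) < (Multiset.card h.edges : ℤ) - k * h.verts.card + 2 * k →
      ∃ h', P h' ∧ Multiset.card h'.edges < Multiset.card h.edges := by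
    rintro h ⟨h1, h2, h3, h4, h5⟩ hlt
    have hc : 2 ≤ h.verts.card := by
      rw [← Finset.card_pair hAB]
      apply Finset.card_le_card
      intro x hx
      simp only [Finset.mem_insert, Finset.mem_singleton] at hx
      rcases hx with rfl | rfl <;> assumption
    have hc' : (2 : ℤ) ≤ h.verts.card := by exact_mod_cast hc
    have hpos : (0 : ℤ) < Multiset.card h.edges := by
      have : (0 : ℤ) ≤ m := by positivity
      nlinarith
    have hpos' : 0 < Multiset.card h.edges := by exact_mod_cast hpos
    obtain ⟨e, he⟩ := Multiset.card_pos_iff_exists_mem.1 hpos'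
    have hsub : (⟨h.verts, h.edges.erase e⟩ : MG V).IsSubgraph h :=
      ⟨subset_rfl, Multiset.erase_le _ _, fun x hx => h1.2.2 x (Multiset.mem_of_mem_erase hx)⟩
    have hcard : Multiset.card (h.edges.erase e) + 1 = Multiset.card h.edges :=
      Multiset.card_erase_add_one he
    refine ⟨⟨h.verts, h.edges.erase e⟩, ⟨hsub.tr h1, h2.sub_s6 hsub, h3, h4, ?_⟩, ?_⟩
    · show (m : ℤ) ≤ (Multiset.card (h.edges.erase e) : ℤ) - k * h.verts.card + 2 * k
      zify at hcard
      linarith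
    · show Multiset.card (h.edges.erase e) < Multiset.card h.edges
      omega
  have hex : ∃ h, P h := by
    have hp : (⟨{A, B}, 0⟩ : MG V).IsSubgraph H := by
      refine ⟨?_, Multiset.zero_le _, by simp⟩
      intro x hx
      simp only [Finset.mem_insert, Finset.mem_singleton] at hx
      rcases hx with rfl | rfl <;> assumption
    by_cases hr : 0 ≤ rAB k l H A B + 2 * k
    · have hmem := Int.csSup_mem (s := {z : ℤ | ∃ h : MG V, h.IsSubgraph H ∧ Sparse k l h ∧
        A ∈ h.verts ∧ B ∈ h.verts ∧ z = (Multiset.card h.edges : ℤ) - k * h.verts.card})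
        ⟨_, ⟨{A, B}, 0⟩, hp, sparse_pair hk hl A B, by simp, by simp, rfl⟩ (rAB_set_bdd hk H A B)
      obtain ⟨h, h1, h2, h3, h4, h5⟩ := hmem
      refine ⟨h, h1, h2, h3, h4, ?_⟩
      rw [← h5]
      change (m : ℤ) ≤ rAB k l H A B + 2 * k
      unfold MAB at hm
      omega
    · refine ⟨⟨{A, B}, 0⟩, hp, sparse_pair hk hl A B, by simp, by simp, ?_⟩
      have : m = 0 := by
        unfold MAB at hm
        omega
      subst this
      simp only [Finset.card_pair hAB, Multiset.card_zero]
      push_cast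
      linarith
  obtain ⟨h, hh, hmin⟩ : ∃ h, P h ∧ ∀ h', P h' → Multiset.card h.edges ≤ Multiset.card h'.edges := by
    have hq : ∃ n, ∃ h, P h ∧ Multiset.card h.edges = n := by
      obtain ⟨h, hh⟩ := hex
      exact ⟨_, h, hh, rfl⟩
    obtain ⟨h, hh, hn⟩ := Nat.find_spec hq
    refine ⟨h, hh, fun h' hh' => ?_⟩
    rw [hn]
    exact Nat.find_min' hq ⟨h', hh', rfl⟩
  have hup : ∀ h' : MG V, h'.IsSubgraph h → A ∈ h'.verts → B ∈ h'.verts →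
      (Multiset.card h'.edges : ℤ) - k * h'.verts.card + 2 * k ≤ m := by
    intro h' hs ha hb
    by_contra hc
    push Not at hc
    obtain ⟨h'', hP'', hlt⟩ := step h' ⟨hs.tr hh.1, hh.2.1.sub_s6 hs, ha, hb, hc.le⟩ hc
    have := hmin h'' hP''
    have := Multiset.card_le_card hs.2.1
    omega
  obtain ⟨h1, h2, h3, h4, h5⟩ := hh
  have hself : h.IsSubgraph h := ⟨subset_rfl, le_rfl, h1.2.2⟩
  have heq := le_antisymm (hup h hself h3 h4) h5
  refine ⟨h, h1, h3, h4, heq, ?_⟩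
  have hr : rAB k l h A B = m - 2 * k := by
    apply IsGreatest.csSup_eq
    constructor
    · exact ⟨h, hself, h2, h3, h4, by linarith⟩
    · rintro z ⟨h', hs, -, ha, hb, rfl⟩
      linarith [hup h' hs ha hb]
  unfold MAB
  rw [hr]
  simp

end MG

/-- Lemma 3.5: let `H`, the subgraph of `G` induced by `VH`, satisfy the
renormalizability condition w.r.t. `A, B`. Then every `(k,l)`-redundant subgraph `g̃` of
`R(G)` is the image under renormalization of a `(k,l)`-redundant subgraph `g` of `G`. -/
theorem redundant_renorm_lift {V : Type*} [DecidableEq V] (k l : ℤ)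
    (hk : 1 ≤ k) (hkl : k ≤ l) (hl2k : l < 2 * k)
    (G : MG V) (hWF : G.WF) (VH : Finset V) (hVH : VH ⊆ G.verts)
    (A B : V) (hA : A ∈ VH) (hB : B ∈ VH) (hAB : A ≠ B)
    (hren : MG.RenormCond G VH A B)
    (gt : MG V) (hsub : gt.IsSubgraph (MG.renormG k l G VH A B))
    (hred : MG.Redundant k l gt) :
    ∃ g : MG V, g.IsSubgraph G ∧ MG.Redundant k l g ∧
      MG.renormSub k l g VH A B = gt := by
  classical
  obtain ⟨hv, he, hin⟩ := hsub
  have hABs : s(A, B) ∈ VH.sym2 := by simp [hA, hB]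
  set F := gt.edges.filter (fun e => e ∉ VH.sym2) with hF
  have hFG : F ≤ G.edges := by
    have h1 := Multiset.filter_le_filter (fun e => e ∉ VH.sym2) he
    refine h1.trans ?_
    simp only [MG.renormG, Multiset.filter_add]
    have : (Multiset.replicate (MG.MAB k l (G.induced VH) A B).toNat s(A, B)).filter
        (fun e => e ∉ VH.sym2) = 0 := by
      rw [Multiset.filter_eq_nil]
      intro e h
      rw [Multiset.eq_of_mem_replicate h]
      simpa using hABs
    rw [this, add_zero]
    exact (Multiset.filter_le _ _).trans (Multiset.filter_le _ _)
  obtain ⟨m, hm, hrep⟩ : ∃ m, m ≤ (MG.MAB k l (G.induced VH) A B).toNat ∧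
      gt.edges.filter (fun e => e ∈ VH.sym2) = Multiset.replicate m s(A, B) := by
    have h1 := Multiset.filter_le_filter (fun e => e ∈ VH.sym2) he
    have h2 : (MG.renormG k l G VH A B).edges.filter (fun e => e ∈ VH.sym2) ≤
        Multiset.replicate (MG.MAB k l (G.induced VH) A B).toNat s(A, B) := by
      simp only [MG.renormG, Multiset.filter_add]
      have : (G.edges.filter (fun e => e ∉ VH.sym2)).filter (fun e => e ∈ VH.sym2) = 0 := by
        rw [Multiset.filter_eq_nil]
        intro e h
        exact (Multiset.mem_filter.1 h).2
      rw [this, zero_add]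
      exact Multiset.filter_le _ _
    exact Multiset.le_replicate_iff.1 (h1.trans h2)
  have hsplit : gt.edges = F + Multiset.replicate m s(A, B) := by
    rw [← hrep, add_comm]
    exact (Multiset.filter_add_not _ _).symm
  have hvG : gt.verts ⊆ G.verts := by
    intro x hx
    have := hv hx
    simp only [MG.renormG, Finset.mem_union, Finset.mem_sdiff, Finset.mem_insert,
      Finset.mem_singleton] at this
    rcases this with h | rfl | rfl
    · exact h.1
    · exact hVH hA
    · exact hVH hB
  have hvAB : ∀ x ∈ gt.verts, x ∈ VH → x = A ∨ x = B := by
    intro x hx hxH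
    have := hv hx
    simp only [MG.renormG, Finset.mem_union, Finset.mem_sdiff, Finset.mem_insert,
      Finset.mem_singleton] at this
    tauto
  by_cases hboth : A ∈ gt.verts ∧ B ∈ gt.verts
  · obtain ⟨hAg, hBg⟩ := hboth
    obtain ⟨h, hsubH, hAh, hBh, hcard, hM⟩ := MG.exists_realise hk hl2k (G.induced VH) A B
      hA hB hAB m hm
    have hhV : h.verts ⊆ VH := hsubH.1
    have hhE : h.edges ≤ G.edges.filter (fun e => e ∈ VH.sym2) := hsubH.2.1
    have hhE' : ∀ e ∈ h.edges, e ∈ VH.sym2 := fun e hx =>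
      (Multiset.mem_filter.1 (Multiset.mem_of_le hhE hx)).2
    have hFn : ∀ e ∈ F, e ∉ VH.sym2 := fun e hx => (Multiset.mem_filter.1 hx).2
    have hFle : F ≤ gt.edges := Multiset.filter_le _ _
    have hfilt1 : (F + h.edges).filter (fun e => e ∉ VH.sym2) = F := by
      rw [Multiset.filter_add, Multiset.filter_eq_self.2 hFn, Multiset.filter_eq_nil.2, add_zero]
      intro e hx
      simpa using hhE' e hx
    have hfilt2 : (F + h.edges).filter (fun e => e ∈ VH.sym2) = h.edges := by
      rw [Multiset.filter_add, Multiset.filter_eq_self.2 hhE', Multiset.filter_eq_nil.2 hFn,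
        zero_add]
    refine ⟨⟨gt.verts ∪ h.verts, F + h.edges⟩, ⟨?_, ?_, ?_⟩, ?_, ?_⟩
    · exact Finset.union_subset hvG (hhV.trans hVH)
    · have h1 : F ≤ G.edges.filter (fun e => e ∉ VH.sym2) := by
        have := Multiset.filter_le_filter (fun e => e ∉ VH.sym2) hFG
        rwa [Multiset.filter_eq_self.2 hFn] at this
      refine (add_le_add h1 hhE).trans ?_
      rw [add_comm]
      exact (Multiset.filter_add_not _ _).le
    · intro e hx
      rcases Multiset.mem_add.1 hx with hx | hx
      · exact Finset.sym2_mono Finset.subset_union_left (hin e (Multiset.mem_of_le hFle hx))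
      · exact Finset.sym2_mono Finset.subset_union_right (hsubH.2.2 e hx)
    · intro hsp
      apply hred
      intro s hs hs1
      have hsin : s.edges.filter (fun e => e ∈ VH.sym2) ≤ Multiset.replicate m s(A, B) := by
        rw [← hrep]
        exact Multiset.filter_le_filter _ hs.2.1
      have hsout : s.edges.filter (fun e => e ∉ VH.sym2) ≤ F :=
        Multiset.filter_le_filter _ hs.2.1
      have hssum : s.edges.filter (fun e => e ∈ VH.sym2) + s.edges.filter (fun e => e ∉ VH.sym2)
        = s.edges := Multiset.filter_add_not _ _
      by_cases hsb : A ∈ s.verts ∧ B ∈ s.verts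
      · obtain ⟨hAs, hBs⟩ := hsb
        have hint : s.verts ∩ h.verts = {A, B} := by
          ext x
          simp only [Finset.mem_inter, Finset.mem_insert, Finset.mem_singleton]
          constructor
          · rintro ⟨h1, h2⟩
            exact hvAB x (hs.1 h1) (hhV h2)
          · rintro (rfl | rfl)
            · exact ⟨hAs, hAh⟩
            · exact ⟨hBs, hBh⟩
        have hcu := Finset.card_union_add_card_inter s.verts h.verts
        rw [hint, Finset.card_pair hAB] at hcu
        have hle : s.verts.card ≤ (s.verts ∪ h.verts).card :=
          Finset.card_le_card Finset.subset_union_left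
        have key := hsp ⟨s.verts ∪ h.verts, s.edges.filter (fun e => e ∉ VH.sym2) + h.edges⟩
          ⟨Finset.union_subset_union hs.1 subset_rfl, add_le_add hsout le_rfl, ?_⟩
          (lt_of_lt_of_le hs1 hle)
        · simp only [Multiset.card_add] at key
          have hc1 := Multiset.card_le_card hsin
          rw [Multiset.card_replicate] at hc1
          have hc2 := congrArg Multiset.card hssum
          rw [Multiset.card_add] at hc2
          zify at hc1 hc2 hcu
          push_cast at key
          have : ((s.verts ∪ h.verts).card : ℤ) = s.verts.card + h.verts.card - 2 := by linarith
          rw [this] at key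
          linarith
        · intro e hx
          rcases Multiset.mem_add.1 hx with hx | hx
          · exact Finset.sym2_mono Finset.subset_union_left
              (hs.2.2 e (Multiset.mem_of_le (Multiset.filter_le _ _) hx))
          · exact Finset.sym2_mono Finset.subset_union_right (hsubH.2.2 e hx)
      · have h0 : s.edges.filter (fun e => e ∈ VH.sym2) = 0 := by
          rw [Multiset.eq_zero_iff_forall_notMem]
          intro e hx
          have h1 := Multiset.eq_of_mem_replicate (Multiset.mem_of_le hsin hx)
          have h2 := hs.2.2 e (Multiset.mem_of_le (Multiset.filter_le _ _) hx)
          rw [h1] at h2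
          exact hsb (by simpa using h2)
        rw [h0, zero_add] at hssum
        refine hsp s ⟨hs.1.trans Finset.subset_union_left, ?_, hs.2.2⟩ hs1
        rw [← hssum]
        exact hsout.trans (Multiset.le_add_right _ _)
    · have hinter : MG.inter ⟨gt.verts ∪ h.verts, F + h.edges⟩ VH = h := by
        cases h with
        | mk hv' he' =>
          simp only [MG.inter, MG.mk.injEq]
          refine ⟨?_, hfilt2⟩
          ext x
          simp only [Finset.mem_inter, Finset.mem_union]
          constructor
          · rintro ⟨h1 | h1, h2⟩
            · rcases hvAB x h1 h2 with rfl | rfl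
              · exact hAh
              · exact hBh
            · exact h1
          · intro h1
            exact ⟨Or.inr h1, hhV h1⟩
      have hgt : gt = ⟨gt.verts, F + Multiset.replicate m s(A, B)⟩ := by
        rw [← hsplit]
      rw [MG.renormSub, hinter, hM]
      conv_rhs => rw [hgt]
      simp only [MG.mk.injEq]
      constructor
      · ext x
        simp only [Finset.mem_union, Finset.mem_sdiff, Finset.mem_inter, Finset.mem_insert,
          Finset.mem_singleton]
        constructor
        · rintro (⟨h1 | h1, h2⟩ | ⟨h1, rfl | rfl⟩)
          · exact h1
          · exact absurd (hhV h1) h2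
          · exact hAg
          · exact hBg
        · intro hx
          by_cases hxH : x ∈ VH
          · exact Or.inr ⟨Or.inl hx, hvAB x hx hxH⟩
          · exact Or.inl ⟨Or.inl hx, hxH⟩
      · rw [hfilt1, if_pos ⟨Finset.mem_union_left _ hAg, Finset.mem_union_left _ hBg⟩]
        simp
  · have hm0 : m = 0 := by
      by_contra hne
      have : s(A, B) ∈ gt.edges := by
        rw [hsplit]
        exact Multiset.mem_add.2 (Or.inr (Multiset.mem_replicate.2 ⟨hne, rfl⟩))
      exact hboth (by simpa using hin _ this)
    have hEF : gt.edges = F := by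
      rw [hsplit, hm0]
      simp
    refine ⟨gt, ⟨hvG, hEF ▸ hFG, hin⟩, hred, ?_⟩
    have hgt : gt = ⟨gt.verts, F⟩ := by rw [← hEF]
    rw [MG.renormSub, if_neg hboth]
    conv_rhs => rw [hgt]
    simp only [MG.mk.injEq, add_zero]
    refine ⟨?_, rfl⟩
    ext x
    have := hvAB x
    simp only [Finset.mem_union, Finset.mem_sdiff, Finset.mem_inter, Finset.mem_insert,
      Finset.mem_singleton]
    tauto
end

section
/- (Proposition 3.2 (i).) Let k, l be integers with k ≤ l < 2k and k ≥ 1. Let G = (V, E) be a multigraph, V_H ⊆ V with distinct A, B ∈ V_H, and suppose the induced subgraph H = (V_H, E_H) satisfies the renormalizability condition with respect to A, B. Then A and B are (k,l)-rigidly connected in G if and only if A and B are (k,l)-rigidly connected in R(G). -/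
namespace MG

section helpers
variable {V : Type*} [DecidableEq V]

theorem IsSubgraph.trans'_s7 {a b c : MG V} (h : a.IsSubgraph b) (h' : b.IsSubgraph c) :
    a.IsSubgraph c :=
  ⟨h.1.trans h'.1, h.2.1.trans h'.2.1, h.2.2⟩

theorem Sparse.mono' {k l : ℤ} {a b : MG V} (h : a.IsSubgraph b) (hb : Sparse k l b) :
    Sparse k l a := fun g hg hc => hb g (hg.trans'_s7 h) hc

theorem edges_zero (g : MG V) (hs : ∀ e ∈ g.edges, e ∈ g.verts.sym2)
    (hd : ∀ e ∈ g.edges, ¬ e.IsDiag) (hc : g.verts.card ≤ 1) : Multiset.card g.edges = 0 := by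
  rw [Multiset.card_eq_zero, Multiset.eq_zero_iff_forall_notMem]
  intro e he
  have h1 := hs e he
  have h2 := hd e he
  induction e using Sym2.ind with
  | _ x y =>
    rw [Finset.mk_mem_sym2_iff] at h1
    exact h2 (Finset.card_le_one.1 hc x h1.1 y h1.2)

theorem one_lt_of_mem {S : Finset V} {A B : V} (hAB : A ≠ B) (hA : A ∈ S) (hB : B ∈ S) :
    1 < S.card := Finset.one_lt_card.2 ⟨A, hA, B, hB, hAB⟩

theorem empty_sparse {k l : ℤ} (hk : 1 ≤ k) (hl2k : l < 2 * k) (S : Finset V) :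
    Sparse k l (⟨S, 0⟩ : MG V) := by
  intro g hg hc
  have h0 : g.edges = 0 := Multiset.le_zero.1 hg.2.1
  have hc' : (2 : ℤ) ≤ g.verts.card := by exact_mod_cast hc
  rw [h0]
  simp only [Multiset.card_zero, Nat.cast_zero]
  nlinarith

theorem rAB_bdd_s7 {k l : ℤ} (H : MG V) {A B : V} (hAB : A ≠ B) :
    BddAbove {z : ℤ | ∃ h : MG V, h.IsSubgraph H ∧ Sparse k l h ∧
    A ∈ h.verts ∧ B ∈ h.verts ∧ z = (Multiset.card h.edges : ℤ) - k * h.verts.card} := by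
  refine ⟨-l, ?_⟩
  rintro z ⟨h, h1, h2, h3, h4, rfl⟩
  have := h2 h ⟨subset_rfl, le_rfl, h1.2.2⟩ (one_lt_of_mem hAB h3 h4)
  linarith

theorem le_rAB {k l : ℤ} {H h : MG V} {A B : V} (hAB : A ≠ B) (h1 : h.IsSubgraph H)
    (h2 : Sparse k l h) (hA : A ∈ h.verts) (hB : B ∈ h.verts) :
    (Multiset.card h.edges : ℤ) - k * h.verts.card ≤ rAB k l H A B :=
  le_csSup (rAB_bdd_s7 H hAB) ⟨h, h1, h2, hA, hB, rfl⟩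

theorem exists_rAB {k l : ℤ} (hk : 1 ≤ k) (hl2k : l < 2 * k) {H : MG V} {A B : V} (hAB : A ≠ B)
    (hA : A ∈ H.verts) (hB : B ∈ H.verts) :
    ∃ h : MG V, h.IsSubgraph H ∧ Sparse k l h ∧ A ∈ h.verts ∧ B ∈ h.verts ∧
      rAB k l H A B = (Multiset.card h.edges : ℤ) - k * h.verts.card := by
  refine Int.csSup_mem ?_ (rAB_bdd_s7 (k := k) (l := l) H hAB)
  refine ⟨_, ⟨{A, B}, 0⟩, ⟨?_, by simp, by simp⟩, empty_sparse hk hl2k _, by simp, by simp, rfl⟩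
  intro x hx
  simp only [Finset.mem_insert, Finset.mem_singleton] at hx
  rcases hx with rfl | rfl <;> assumption

/-- a sparse subgraph of prescribed value, all of whose subgraphs have at most that value -/
theorem exists_exact_s7 {k l : ℤ} (hk : 1 ≤ k) (hl2k : l < 2 * k) {H : MG V} {A B : V} (hAB : A ≠ B)
    (hA : A ∈ H.verts) (hB : B ∈ H.verts) (m : ℕ) (hm : (m : ℤ) ≤ MAB k l H A B) :
    ∃ h : MG V, h.IsSubgraph H ∧ Sparse k l h ∧ A ∈ h.verts ∧ B ∈ h.verts ∧
      (Multiset.card h.edges : ℤ) - k * h.verts.card + 2 * k = m ∧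
      ∀ g : MG V, g.IsSubgraph h → A ∈ g.verts → B ∈ g.verts →
        (Multiset.card g.edges : ℤ) - k * g.verts.card + 2 * k ≤ m := by
  classical
  let P : ℕ → Prop := fun n => ∃ h : MG V, h.IsSubgraph H ∧ Sparse k l h ∧ A ∈ h.verts ∧
    B ∈ h.verts ∧ (m : ℤ) ≤ (Multiset.card h.edges : ℤ) - k * h.verts.card + 2 * k ∧
    Multiset.card h.edges = n
  have hP : ∃ n, P n := by
    obtain ⟨h, h1, h2, h3, h4, h5⟩ := exists_rAB (l := l) hk hl2k hAB hA hB
    by_cases hr : 0 ≤ rAB k l H A B + 2 * k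
    · refine ⟨_, h, h1, h2, h3, h4, ?_, rfl⟩
      rw [MAB, max_eq_left hr] at hm
      linarith
    · exfalso
      apply hr
      have := le_rAB (k := k) (l := l) (H := H) (h := ⟨{A, B}, 0⟩) hAB
        ⟨by
          intro x hx
          simp only [Finset.mem_insert, Finset.mem_singleton] at hx
          rcases hx with rfl | rfl <;> assumption, by simp, by simp⟩
        (empty_sparse hk hl2k _) (by simp) (by simp)
      simp only [Finset.card_pair hAB, Multiset.card_zero] at this
      push_cast at this
      linarith
  obtain ⟨h, h1, h2, h3, h4, h5, h6⟩ := Nat.find_spec hP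
  have key : ∀ g : MG V, g.IsSubgraph h → A ∈ g.verts → B ∈ g.verts →
        (Multiset.card g.edges : ℤ) - k * g.verts.card + 2 * k ≤ m := by
    intro g hg gA gB
    by_contra hcon
    push Not at hcon
    have hc : (2 : ℤ) ≤ g.verts.card := by exact_mod_cast one_lt_of_mem hAB gA gB
    have hpos : 0 < Multiset.card g.edges := by
      have : (0 : ℤ) < Multiset.card g.edges := by nlinarith
      exact_mod_cast this
    obtain ⟨e, he⟩ := Multiset.card_pos_iff_exists_mem.1 hpos
    have hce := Multiset.card_erase_add_one he
    have hsub : (⟨g.verts, g.edges.erase e⟩ : MG V).IsSubgraph h :=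
      ⟨hg.1, (Multiset.erase_le _ _).trans hg.2.1,
        fun x hx => hg.2.2 x (Multiset.mem_of_mem_erase hx)⟩
    have : P (Multiset.card (g.edges.erase e)) := by
      refine ⟨_, hsub.trans'_s7 h1, h2.mono' hsub, gA, gB, ?_, rfl⟩
      have : (Multiset.card (g.edges.erase e) : ℤ) + 1 = Multiset.card g.edges := by
        exact_mod_cast hce
      simp only
      linarith
    have h7 := Nat.find_min' hP this
    have h8 := Multiset.card_le_card hg.2.1
    omega
  exact ⟨h, h1, h2, h3, h4, le_antisymm (key h ⟨subset_rfl, le_rfl, h1.2.2⟩ h3 h4) h5, key⟩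

theorem card_split (p : Sym2 V → Prop) [DecidablePred p] (s : Multiset (Sym2 V)) :
    Multiset.card (s.filter p) + Multiset.card (s.filter (fun e => ¬ p e)) = Multiset.card s := by
  rw [← Multiset.card_add, Multiset.filter_add_not]

theorem card_AB {S VH : Finset V} {A B : V} (hAB : A ≠ B) (hA : A ∈ VH) (hB : B ∈ VH)
    (hS : ∀ x ∈ S, x ∈ VH → x = A ∨ x = B) (hAS : A ∈ S) (hBS : B ∈ S) :
    S.card = (S \ VH).card + 2 := by
  have h1 : S ∩ VH = {A, B} := by
    ext x
    simp only [Finset.mem_inter, Finset.mem_insert, Finset.mem_singleton]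
    constructor
    · rintro ⟨h, h'⟩; exact hS x h h'
    · rintro (rfl | rfl) <;> exact ⟨by assumption, by assumption⟩
  have := Finset.card_sdiff_add_card_inter S VH
  rw [h1, Finset.card_pair hAB] at this
  exact this.symm

theorem forward {k l : ℤ}
    (hk : 1 ≤ k) (G : MG V) (VH : Finset V)
    (A B : V) (hA : A ∈ VH) (hB : B ∈ VH) (hAB : A ≠ B)
    (hren : MG.RenormCond G VH A B) (hr : MG.RigidlyConnected k l G A B) :
      MG.RigidlyConnected k l (MG.renormG k l G VH A B) A B := by
  obtain ⟨T, hT, ⟨hTs, hTc⟩, hAT, hBT⟩ := hr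
  set Eo := T.edges.filter (fun e => e ∉ VH.sym2) with hEo
  set Ei := T.edges.filter (fun e => e ∈ VH.sym2) with hEi
  have hsum : Ei + Eo = T.edges := Multiset.filter_add_not _ _
  have hcsum : Multiset.card Ei + Multiset.card Eo = Multiset.card T.edges := by
    rw [← hsum, Multiset.card_add]
  let h : MG V := ⟨T.verts ∩ VH, Ei⟩
  have hEoT : Eo ≤ T.edges := Multiset.filter_le _ _
  have hEiT : Ei ≤ T.edges := Multiset.filter_le _ _
  have hhs : ∀ e ∈ Ei, e ∈ (T.verts ∩ VH).sym2 := by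
    intro e he
    have h1 := hT.2.2 e (Multiset.mem_of_le hEiT he)
    have h2 := (Multiset.mem_filter.1 he).2
    rw [Finset.mem_sym2_iff] at *
    exact fun a ha => Finset.mem_inter.2 ⟨h1 a ha, h2 a ha⟩
  have hhT : h.IsSubgraph T := ⟨Finset.inter_subset_left, hEiT, hhs⟩
  have hhH : h.IsSubgraph (G.induced VH) :=
    ⟨Finset.inter_subset_right, Multiset.filter_le_filter _ hT.2.1, hhs⟩
  have hle := le_rAB hAB hhH (hTs.mono' hhT) (Finset.mem_inter.2 ⟨hAT, hA⟩)
    (Finset.mem_inter.2 ⟨hBT, hB⟩)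
  change (Multiset.card Ei : ℤ) - k * (T.verts ∩ VH).card ≤ _ at hle
  have hTv := Finset.card_sdiff_add_card_inter T.verts VH
  let S : Finset V := (T.verts \ VH) ∪ {A, B}
  have memS : ∀ x, x ∈ S ↔ (x ∈ T.verts ∧ x ∉ VH) ∨ x = A ∨ x = B := by
    intro x; simp [S]; tauto
  have hST : S ⊆ T.verts := by
    intro x hx
    rcases (memS x).1 hx with h | rfl | rfl
    · exact h.1
    · exact hAT
    · exact hBT
  have hAS : A ∈ S := (memS A).2 (by simp)
  have hBS : B ∈ S := (memS B).2 (by simp)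
  have hSV : S \ VH = T.verts \ VH := by
    ext x
    simp only [Finset.mem_sdiff, memS]
    constructor
    · rintro ⟨h | rfl | rfl, h'⟩
      · exact h
      · exact absurd hA h'
      · exact absurd hB h'
    · intro h; exact ⟨Or.inl h, h.2⟩
  have hSc : S.card = (T.verts \ VH).card + 2 := by
    rw [← hSV]
    refine card_AB hAB hA hB ?_ hAS hBS
    intro x hx hx'
    rcases (memS x).1 hx with h | h
    · exact absurd hx' h.2
    · exact h
  have hEoS : ∀ e ∈ Eo, e ∈ S.sym2 := by
    intro e he
    have heT := Multiset.mem_of_le hEoT he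
    have h1 := hT.2.2 e heT
    have h2 := (Multiset.mem_filter.1 he).2
    rw [Finset.mem_sym2_iff] at *
    intro a ha
    rw [memS]
    by_cases haV : a ∈ VH
    · right
      push Not at h2
      obtain ⟨b, hb, hbV⟩ := h2
      have h3 := hren e (Multiset.mem_of_le hT.2.1 heT) ⟨a, ha, haV⟩ ⟨b, hb, hbV⟩
      have hab : a ≠ b := by rintro rfl; exact hbV haV
      have he' := (Sym2.mem_and_mem_iff hab).1 ⟨ha, hb⟩
      subst he'
      rw [Sym2.mem_iff, Sym2.mem_iff] at h3
      rcases h3 with (h | h) | (h | h)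
      · exact Or.inl h.symm
      · subst h; exact absurd hA hbV
      · exact Or.inr h.symm
      · subst h; exact absurd hB hbV
    · exact Or.inl ⟨h1 a ha, haV⟩
  have hout := hTs ⟨S, Eo⟩ ⟨hST, hEoT, hEoS⟩ (one_lt_of_mem hAB hAS hBS)
  simp only at hout
  zify at hcsum hTv hSc
  have hc0 : 0 ≤ (Multiset.card Ei : ℤ) - k * (T.verts ∩ VH).card + 2 * k := by
    rw [hSc] at hout
    rw [← hTv] at hTc
    linarith
  obtain ⟨c, hc⟩ := Int.eq_ofNat_of_zero_le hc0
  have hcM : c ≤ (MAB k l (G.induced VH) A B).toNat := by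
    have : (c : ℤ) ≤ MAB k l (G.induced VH) A B := by
      rw [← hc]; exact le_trans (by linarith) (le_max_left _ _)
    omega
  have hABV : s(A, B) ∈ VH.sym2 := by simp [hA, hB]
  refine ⟨⟨S, Eo + Multiset.replicate c s(A, B)⟩, ⟨?_, ?_, ?_⟩, ⟨?_, ?_⟩, hAS, hBS⟩
  · exact Finset.union_subset_union (Finset.sdiff_subset_sdiff hT.1 subset_rfl) subset_rfl
  · exact add_le_add (Multiset.filter_le_filter _ hT.2.1) ((Multiset.replicate_le_replicate _).2 hcM)
  · intro e he
    rcases Multiset.mem_add.1 he with he | he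
    · exact hEoS e he
    · rw [Multiset.eq_of_mem_replicate he]; simp [hAS, hBS]
  · intro g hg hgc
    obtain ⟨g1, g2, g3⟩ := hg
    simp only at g1 g2
    have hspl := card_split (fun e => e ∈ VH.sym2) g.edges
    have f1 : g.edges.filter (fun e => e ∉ VH.sym2) ≤ Eo := by
      refine (Multiset.filter_le_filter _ g2).trans ?_
      rw [Multiset.filter_add]
      rw [(Multiset.filter_eq_nil (s := Multiset.replicate c s(A, B))).2, add_zero]
      · exact Multiset.filter_le _ _
      · intro e he; rw [Multiset.eq_of_mem_replicate he]; exact not_not.2 hABV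
    have f2 : g.edges.filter (fun e => e ∈ VH.sym2) ≤ Multiset.replicate c s(A, B) := by
      refine (Multiset.filter_le_filter _ g2).trans ?_
      rw [Multiset.filter_add]
      rw [(Multiset.filter_eq_nil (s := Eo)).2, zero_add]
      · exact Multiset.filter_le _ _
      · intro e he; exact (Multiset.mem_filter.1 he).2
    by_cases hgAB : A ∈ g.verts ∧ B ∈ g.verts
    · obtain ⟨gA, gB⟩ := hgAB
      have f3 := Multiset.card_le_card f2
      rw [Multiset.card_replicate] at f3
      have hgv := card_AB hAB hA hB (S := g.verts) (fun x hx hx' => by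
        rcases (memS x).1 (g1 hx) with h | h
        · exact absurd hx' h.2
        · exact h) gA gB
      have hd : Disjoint (g.verts \ VH) (T.verts ∩ VH) := by
        rw [Finset.disjoint_left]
        intro x hx hx'
        exact (Finset.mem_sdiff.1 hx).2 (Finset.mem_inter.1 hx').2
      have hb := hTs ⟨(g.verts \ VH) ∪ (T.verts ∩ VH),
          g.edges.filter (fun e => e ∉ VH.sym2) + Ei⟩
        ⟨?_, ?_, ?_⟩ (one_lt_of_mem hAB (by simp [hAT, hA]) (by simp [hBT, hB]))
      · simp only [Finset.card_union_of_disjoint hd, Multiset.card_add] at hb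
        push_cast at hb
        zify at hspl f3 hgv
        rw [hgv]
        linarith
      · exact Finset.union_subset (Finset.sdiff_subset.trans (g1.trans hST))
          Finset.inter_subset_left
      · simp only
        rw [← hsum, add_comm]
        exact add_le_add le_rfl f1
      · intro e he
        simp only at he ⊢
        rcases Multiset.mem_add.1 he with he | he
        · have h1 := g3 e (Multiset.mem_filter.1 he).1
          rw [Finset.mem_sym2_iff] at *
          intro a ha
          have h2 := h1 a ha
          rcases (memS a).1 (g1 h2) with h | rfl | rfl
          · simp [h2, h.2]
          · simp [hA, hAT]
          · simp [hB, hBT]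
        · exact Finset.sym2_mono Finset.subset_union_right (hhs e he)
    · have f3 : g.edges.filter (fun e => e ∈ VH.sym2) = 0 := by
        rw [Multiset.eq_zero_iff_forall_notMem]
        intro e he
        have h1 := Multiset.eq_of_mem_replicate (Multiset.mem_of_le f2 he)
        have h2 := g3 e (Multiset.mem_filter.1 he).1
        rw [h1, Finset.mk_mem_sym2_iff] at h2
        exact hgAB h2
      have f4 : g.edges ≤ T.edges := by
        rw [← Multiset.filter_add_not (fun e => e ∈ VH.sym2) g.edges, f3, zero_add]
        exact f1.trans hEoT
      exact hTs g ⟨g1.trans hST, f4, g3⟩ hgc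
  · simp only [Multiset.card_add, Multiset.card_replicate]
    push_cast
    rw [hSc]
    rw [← hTv] at hTc
    linarith

theorem backward {k l : ℤ}
    (hk : 1 ≤ k) (hkl : k ≤ l) (hl2k : l < 2 * k)
    (G : MG V) (hWF : G.WF) (VH : Finset V) (hVH : VH ⊆ G.verts)
    (A B : V) (hA : A ∈ VH) (hB : B ∈ VH) (hAB : A ≠ B)
    (hr : MG.RigidlyConnected k l (MG.renormG k l G VH A B) A B) :
      MG.RigidlyConnected k l G A B := by
  obtain ⟨T, ⟨hT1, hT2, hT3⟩, ⟨hTs, hTc⟩, hAT, hBT⟩ := hr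
  have hABV : s(A, B) ∈ VH.sym2 := by simp [hA, hB]
  simp only [renormG] at hT1 hT2
  set Eo := T.edges.filter (fun e => e ∉ VH.sym2) with hEo
  have hTVH : ∀ x ∈ T.verts, x ∈ VH → x = A ∨ x = B := by
    intro x hx hx'
    have := hT1 hx
    simp only [Finset.mem_union, Finset.mem_sdiff, Finset.mem_insert, Finset.mem_singleton] at this
    tauto
  have hTG : T.verts ⊆ G.verts := by
    refine hT1.trans (Finset.union_subset Finset.sdiff_subset ?_)
    intro x hx
    simp only [Finset.mem_insert, Finset.mem_singleton] at hx
    rcases hx with rfl | rfl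
    · exact hVH hA
    · exact hVH hB
  have hTv := card_AB hAB hA hB hTVH hAT hBT
  have hEoT : Eo ≤ T.edges := Multiset.filter_le _ _
  have hEoG : Eo ≤ G.edges.filter (fun e => e ∉ VH.sym2) := by
    refine (Multiset.filter_le_filter _ hT2).trans ?_
    rw [Multiset.filter_add]
    rw [(Multiset.filter_eq_nil (s := Multiset.replicate _ s(A, B))).2, add_zero]
    · exact Multiset.filter_le _ _
    · intro e he; rw [Multiset.eq_of_mem_replicate he]; exact not_not.2 hABV
  have hEiR : T.edges.filter (fun e => e ∈ VH.sym2) ≤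
      Multiset.replicate (MAB k l (G.induced VH) A B).toNat s(A, B) := by
    refine (Multiset.filter_le_filter _ hT2).trans ?_
    rw [Multiset.filter_add]
    rw [(Multiset.filter_eq_nil (s := Multiset.filter _ G.edges)).2, zero_add]
    · exact Multiset.filter_le _ _
    · intro e he; exact (Multiset.mem_filter.1 he).2
  set m := Multiset.card (T.edges.filter (fun e => e ∈ VH.sym2)) with hm
  have hspl : m + Multiset.card Eo = Multiset.card T.edges :=
    card_split (fun e => e ∈ VH.sym2) T.edges
  have hmM : (m : ℤ) ≤ MAB k l (G.induced VH) A B := by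
    have h1 := Multiset.card_le_card hEiR
    rw [Multiset.card_replicate] at h1
    have h2 : 0 ≤ MAB k l (G.induced VH) A B := le_max_right _ _
    omega
  obtain ⟨h, hh, hhs, hAh, hBh, hhc, hmax⟩ := exists_exact_s7 (l := l) hk hl2k hAB
    (H := G.induced VH) hA hB m hmM
  have hhV : h.verts ⊆ VH := hh.1
  have hhG : h.edges ≤ G.edges.filter (fun e => e ∈ VH.sym2) := hh.2.1
  have hd : Disjoint (T.verts \ VH) h.verts := by
    rw [Finset.disjoint_left]
    intro x hx hx'
    exact (Finset.mem_sdiff.1 hx).2 (hhV hx')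
  refine ⟨⟨(T.verts \ VH) ∪ h.verts, Eo + h.edges⟩, ⟨?_, ?_, ?_⟩, ⟨?_, ?_⟩, by simp [hAh],
    by simp [hBh]⟩
  · exact Finset.union_subset (Finset.sdiff_subset.trans hTG) (hhV.trans hVH)
  · simp only
    rw [← Multiset.filter_add_not (fun e => e ∈ VH.sym2) G.edges, add_comm]
    exact add_le_add hhG hEoG
  · intro e he
    simp only at he ⊢
    rcases Multiset.mem_add.1 he with he | he
    · have h1 := hT3 e (Multiset.mem_of_le hEoT he)
      rw [Finset.mem_sym2_iff] at *
      intro a ha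
      have h2 := h1 a ha
      by_cases haV : a ∈ VH
      · rcases hTVH a h2 haV with rfl | rfl
        · simp [hAh]
        · simp [hBh]
      · simp [h2, haV]
    · exact Finset.sym2_mono Finset.subset_union_right (hh.2.2 e he)
  · intro g hg hgc
    obtain ⟨g1, g2, g3⟩ := hg
    simp only at g1 g2
    have hgspl := card_split (fun e => e ∈ VH.sym2) g.edges
    set Fo := g.edges.filter (fun e => e ∉ VH.sym2) with hFo
    set Fi := g.edges.filter (fun e => e ∈ VH.sym2) with hFi
    have f1 : Fo ≤ Eo := by
      refine (Multiset.filter_le_filter _ g2).trans ?_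
      rw [Multiset.filter_add]
      rw [(Multiset.filter_eq_nil (s := h.edges)).2, add_zero]
      · exact Multiset.filter_le _ _
      · intro e he
        exact not_not.2 (Multiset.mem_filter.1 (Multiset.mem_of_le hhG he)).2
    have f2 : Fi ≤ h.edges := by
      refine (Multiset.filter_le_filter _ g2).trans ?_
      rw [Multiset.filter_add]
      rw [(Multiset.filter_eq_nil (s := Eo)).2, zero_add]
      · exact Multiset.filter_le _ _
      · intro e he; exact (Multiset.mem_filter.1 he).2
    have hFis : ∀ e ∈ Fi, e ∈ (g.verts ∩ VH).sym2 := by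
      intro e he
      have h1 := g3 e (Multiset.mem_filter.1 he).1
      have h2 := (Multiset.mem_filter.1 he).2
      rw [Finset.mem_sym2_iff] at *
      exact fun a ha => Finset.mem_inter.2 ⟨h1 a ha, h2 a ha⟩
    have hFos : ∀ e ∈ Fo, e ∈ (g.verts ∩ T.verts).sym2 := by
      intro e he
      have h1 := g3 e (Multiset.mem_filter.1 he).1
      have h2 := hT3 e (Multiset.mem_of_le (f1.trans hEoT) he)
      rw [Finset.mem_sym2_iff] at *
      exact fun a ha => Finset.mem_inter.2 ⟨h1 a ha, h2 a ha⟩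
    have hgVh : g.verts ∩ VH ⊆ h.verts := by
      intro x hx
      have hx := Finset.mem_inter.1 hx
      rcases Finset.mem_union.1 (g1 hx.1) with h | h
      · exact absurd hx.2 (Finset.mem_sdiff.1 h).2
      · exact h
    have hi : (⟨g.verts ∩ VH, Fi⟩ : MG V).IsSubgraph h := ⟨hgVh, f2, hFis⟩
    have ho : (⟨g.verts ∩ T.verts, Fo⟩ : MG V).IsSubgraph T :=
      ⟨Finset.inter_subset_right, f1.trans hEoT, hFos⟩
    have hoV : (g.verts ∩ T.verts) \ VH = g.verts \ VH := by
      ext x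
      simp only [Finset.mem_sdiff, Finset.mem_inter]
      constructor
      · rintro ⟨⟨h, _⟩, h'⟩; exact ⟨h, h'⟩
      · rintro ⟨h1, h2⟩
        refine ⟨⟨h1, ?_⟩, h2⟩
        rcases Finset.mem_union.1 (g1 h1) with h | h
        · exact (Finset.mem_sdiff.1 h).1
        · exact absurd (hhV h) h2
    have hgv := Finset.card_sdiff_add_card_inter g.verts VH
    by_cases hgAB : A ∈ g.verts ∧ B ∈ g.verts
    · obtain ⟨gA, gB⟩ := hgAB
      have b1 := hmax _ hi (Finset.mem_inter.2 ⟨gA, hA⟩) (Finset.mem_inter.2 ⟨gB, hB⟩)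
      have b2 := hTs ⟨g.verts ∩ T.verts, T.edges.filter (fun e => e ∈ VH.sym2) + Fo⟩
        ⟨Finset.inter_subset_right, ?_, ?_⟩
        (one_lt_of_mem hAB (Finset.mem_inter.2 ⟨gA, hAT⟩) (Finset.mem_inter.2 ⟨gB, hBT⟩))
      · have hov := card_AB (S := g.verts ∩ T.verts) hAB hA hB
          (fun x hx hx' => hTVH x (Finset.mem_inter.1 hx).2 hx')
          (Finset.mem_inter.2 ⟨gA, hAT⟩) (Finset.mem_inter.2 ⟨gB, hBT⟩)
        rw [hoV] at hov
        simp only [Multiset.card_add] at b1 b2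
        rw [← hm, hov] at b2
        push_cast at b2
        zify at hgspl hgv
        rw [← hgv]
        linarith
      · simp only
        rw [← Multiset.filter_add_not (fun e => e ∈ VH.sym2) T.edges]
        exact add_le_add (by rw [Multiset.filter_add_not]) f1
      · intro e he
        simp only at he ⊢
        rcases Multiset.mem_add.1 he with he | he
        · rw [Multiset.eq_of_mem_replicate (Multiset.mem_of_le hEiR he)]
          simp [gA, gB, hAT, hBT]
        · exact hFos e he
    · have hdi : ∀ e ∈ Fi, ¬ e.IsDiag := fun e he =>
        hWF.1 e (Multiset.mem_filter.1 (Multiset.mem_of_le (f2.trans hhG) he)).1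
      have hdo : ∀ e ∈ Fo, ¬ e.IsDiag := fun e he =>
        hWF.1 e (Multiset.mem_filter.1 (Multiset.mem_of_le (f1.trans hEoG) he)).1
      have hs : ((g.verts ∩ T.verts) ∩ VH).card ≤ 1 := by
        rw [Finset.card_le_one]
        intro x hx y hy
        simp only [Finset.mem_inter] at hx hy
        rcases hTVH x hx.1.2 hx.2 with rfl | rfl <;> rcases hTVH y hy.1.2 hy.2 with rfl | rfl
        · rfl
        · exact absurd ⟨hx.1.1, hy.1.1⟩ hgAB
        · exact absurd ⟨hy.1.1, hx.1.1⟩ hgAB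
        · rfl
      have hov := Finset.card_sdiff_add_card_inter (g.verts ∩ T.verts) VH
      rw [hoV] at hov
      have hni : (g.verts ∩ VH).card ≤ g.verts.card := Finset.card_le_card Finset.inter_subset_left
      have hno : (g.verts ∩ T.verts).card ≤ g.verts.card :=
        Finset.card_le_card Finset.inter_subset_left
      have bi := hhs _ hi
      have bo := hTs _ ho
      have zi := edges_zero _ hi.2.2 hdi
      have zo := edges_zero _ ho.2.2 hdo
      simp only at bi bo zi zo
      have hgc' : 2 ≤ g.verts.card := hgc
      zify at hgspl hgv hov hni hno hs hgc'
      rcases Nat.lt_or_ge 1 (g.verts ∩ VH).card with ci | ci <;>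
      rcases Nat.lt_or_ge 1 (g.verts ∩ T.verts).card with co | co
      · have := bi ci
        have := bo co
        have h5 : k * (((g.verts ∩ T.verts) ∩ VH).card : ℤ) ≤ k * 1 :=
          mul_le_mul_of_nonneg_left hs (by linarith)
        have h6 := congrArg (k * ·) hgv
        have h7 := congrArg (k * ·) hov
        simp only [mul_add] at h6 h7
        linarith
      · have := bi ci
        have h1 := zo co
        zify at h1
        nlinarith
      · have := bo co
        have h1 := zi ci
        zify at h1
        nlinarith
      · have h0 := zi ci
        have h1 := zo co
        zify at h0 h1
        nlinarith
  · simp only [Finset.card_union_of_disjoint hd, Multiset.card_add]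
    push_cast
    zify at hspl hTv
    rw [hTv] at hTc
    linarith

end helpers

end MG

/-- Proposition 3.2 (i): let `H`, the subgraph of `G` induced by `VH`,
satisfy the renormalizability condition w.r.t. `A, B`. Then `A` and `B` are
`(k,l)`-rigidly connected in `G` if and only if they are in `R(G)`. -/
theorem rigidlyConnected_renorm_iff {V : Type*} [DecidableEq V] (k l : ℤ)
    (hk : 1 ≤ k) (hkl : k ≤ l) (hl2k : l < 2 * k)
    (G : MG V) (hWF : G.WF) (VH : Finset V) (hVH : VH ⊆ G.verts)
    (A B : V) (hA : A ∈ VH) (hB : B ∈ VH) (hAB : A ≠ B)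
    (hren : MG.RenormCond G VH A B) :
    MG.RigidlyConnected k l G A B ↔
      MG.RigidlyConnected k l (MG.renormG k l G VH A B) A B := by
  exact ⟨MG.forward hk G VH A B hA hB hAB hren,
    MG.backward hk hkl hl2k G hWF VH hVH A B hA hB hAB⟩
end

section
/- (Proposition 3.2 (ii).) Let k, l be integers with k ≤ l < 2k and k ≥ 1. Let G = (V, E) be a multigraph, V_H ⊆ V with distinct A, B ∈ V_H, and suppose the induced subgraph H = (V_H, E_H) satisfies the renormalizability condition with respect to A, B. Then the numbers of (k,l)-redundant edges satisfy n_red(G) = n_red(R(G)) + n_red(H). -/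
namespace NR

variable {V : Type*} [DecidableEq V]

/-- number of edges of `I` inside `X` -/
def ii (I : Multiset (Sym2 V)) (X : Finset V) : ℕ :=
  Multiset.card (I.filter (· ∈ X.sym2))

def sp (k l : ℤ) (W : Finset V) (I : Multiset (Sym2 V)) : Prop :=
  ∀ X ⊆ W, 2 ≤ X.card → (ii I X : ℤ) ≤ k * X.card - l

lemma sparse_iff (k l : ℤ) (W : Finset V) (I : Multiset (Sym2 V)) :
    MG.Sparse k l ⟨W, I⟩ ↔ sp k l W I := by
  constructor
  · intro h X hX h2
    refine h ⟨X, I.filter (· ∈ X.sym2)⟩ ⟨hX, Multiset.filter_le _ _, ?_⟩ h2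
    intro e he
    exact (Multiset.mem_filter.1 he).2
  · rintro h ⟨X, E⟩ ⟨h1, h2, h3⟩ hc
    refine le_trans ?_ (h X h1 hc)
    have : E ≤ I.filter (· ∈ X.sym2) := Multiset.le_filter.2 ⟨h2, h3⟩
    exact_mod_cast Multiset.card_le_card this

lemma ii_add (I J : Multiset (Sym2 V)) (X : Finset V) : ii (I + J) X = ii I X + ii J X := by
  simp [ii]

lemma ii_le_card (I : Multiset (Sym2 V)) (X : Finset V) : ii I X ≤ Multiset.card I :=
  Multiset.card_le_card (Multiset.filter_le _ _)

lemma ii_mono_left {I J : Multiset (Sym2 V)} (h : I ≤ J) (X : Finset V) : ii I X ≤ ii J X :=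
  Multiset.card_le_card (Multiset.filter_le_filter _ h)

lemma ii_le_of_imp {I : Multiset (Sym2 V)} {X Y : Finset V}
    (h : ∀ e ∈ I, e ∈ X.sym2 → e ∈ Y.sym2) : ii I X ≤ ii I Y := by
  apply Multiset.card_le_card
  refine Multiset.le_filter.2 ⟨Multiset.filter_le _ _, ?_⟩
  intro e he
  rw [Multiset.mem_filter] at he
  exact h e he.1 he.2

lemma ii_mono (I : Multiset (Sym2 V)) {X Y : Finset V} (h : X ⊆ Y) : ii I X ≤ ii I Y :=
  ii_le_of_imp fun _ _ he => Finset.sym2_mono h he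

lemma ii_eq_card {I : Multiset (Sym2 V)} {X : Finset V} (h : ∀ e ∈ I, e ∈ X.sym2) :
    ii I X = Multiset.card I := by
  unfold ii; rw [Multiset.filter_eq_self.2 h]

lemma two_le_of_mem {e : Sym2 V} (hd : ¬ e.IsDiag) {X : Finset V} (h : e ∈ X.sym2) :
    2 ≤ X.card := by
  induction e using Sym2.ind with
  | _ a b =>
    rw [Finset.mk_mem_sym2_iff] at h
    exact Finset.one_lt_card.2 ⟨a, h.1, b, h.2, hd⟩

lemma ii_eq_zero {I : Multiset (Sym2 V)} (hI : ∀ e ∈ I, ¬ e.IsDiag) {X : Finset V}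
    (h : X.card < 2) : ii I X = 0 := by
  unfold ii
  rw [Multiset.card_eq_zero, Multiset.filter_eq_nil]
  intro e he hx
  have := two_le_of_mem (hI e he) hx
  omega

lemma mem_inter_sym2 {e : Sym2 V} {X Y : Finset V} (h1 : e ∈ X.sym2) (h2 : e ∈ Y.sym2) :
    e ∈ (X ∩ Y).sym2 := by
  rw [Finset.mem_sym2_iff] at *
  intro a ha
  exact Finset.mem_inter.2 ⟨h1 a ha, h2 a ha⟩

lemma ii_super (I : Multiset (Sym2 V)) (X Y : Finset V) :
    ii I X + ii I Y ≤ ii I (X ∪ Y) + ii I (X ∩ Y) := by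
  induction I using Multiset.induction with
  | empty => simp [ii]
  | cons e I ih =>
    have hc : ∀ Z : Finset V, ii (e ::ₘ I) Z = ii I Z + if e ∈ Z.sym2 then 1 else 0 := by
      intro Z
      unfold ii
      by_cases h : e ∈ Z.sym2 <;> simp [Multiset.filter_cons_of_pos, Multiset.filter_cons_of_neg, h]
    rw [hc, hc, hc, hc]
    have h1 : e ∈ X.sym2 → e ∈ (X ∪ Y).sym2 := fun h => Finset.sym2_mono Finset.subset_union_left h
    have h2 : e ∈ Y.sym2 → e ∈ (X ∪ Y).sym2 := fun h => Finset.sym2_mono Finset.subset_union_right h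
    have h3 : e ∈ X.sym2 → e ∈ Y.sym2 → e ∈ (X ∩ Y).sym2 := mem_inter_sym2
    split_ifs <;> first | omega | (exfalso; tauto)

lemma sp_mono_left {k l : ℤ} {W : Finset V} {I J : Multiset (Sym2 V)} (h : I ≤ J)
    (hJ : sp k l W J) : sp k l W I := fun X hX h2 =>
  le_trans (by exact_mod_cast ii_mono_left h X) (hJ X hX h2)

lemma sp_extend {k l : ℤ} (hk : 1 ≤ k) (hl2k : l < 2 * k) {W W' : Finset V}
    {I : Multiset (Sym2 V)} (hd : ∀ e ∈ I, ¬ e.IsDiag)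
    (hI : ∀ e ∈ I, e ∈ W.sym2) (h : sp k l W I) : sp k l W' I := by
  intro X hX h2
  have h1 : ii I X ≤ ii I (X ∩ W) := ii_le_of_imp fun e he hx => mem_inter_sym2 hx (hI e he)
  have hc : (X ∩ W).card ≤ X.card := Finset.card_le_card Finset.inter_subset_left
  by_cases h3 : (X ∩ W).card < 2
  · rw [ii_eq_zero hd h3] at h1
    have : (ii I X : ℤ) = 0 := by omega
    rw [this]
    have : (2 : ℤ) ≤ X.card := by exact_mod_cast h2
    nlinarith
  · have := h (X ∩ W) Finset.inter_subset_right (by omega)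
    have h4 : ((X ∩ W).card : ℤ) ≤ X.card := by exact_mod_cast hc
    have h5 : (ii I X : ℤ) ≤ ii I (X ∩ W) := by exact_mod_cast h1
    nlinarith

/-- Disjoint cover count. -/
lemma card_cover (J : Multiset (Sym2 V)) (S : Finset (Finset V))
    (hdis : ∀ e ∈ J, ∀ X ∈ S, ∀ Y ∈ S, e ∈ X.sym2 → e ∈ Y.sym2 → X = Y) :
    Multiset.card (J.filter (fun e => ∃ X ∈ S, e ∈ X.sym2)) = ∑ X ∈ S, ii J X := by
  induction J using Multiset.induction with
  | empty => simp [ii]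
  | cons e I ih =>
    have hc : ∀ Z : Finset V, ii (e ::ₘ I) Z = ii I Z + if e ∈ Z.sym2 then 1 else 0 := by
      intro Z
      unfold ii
      by_cases h : e ∈ Z.sym2 <;> simp [Multiset.filter_cons_of_pos, Multiset.filter_cons_of_neg, h]
    simp only [hc, Finset.sum_add_distrib]
    rw [← ih (fun e he => hdis e (Multiset.mem_cons_of_mem he))]
    by_cases h : ∃ X ∈ S, e ∈ X.sym2
    · rw [Multiset.filter_cons_of_pos (p := fun e => ∃ X ∈ S, e ∈ X.sym2) _ h, Multiset.card_cons]
      congr 1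
      obtain ⟨X, hX, he⟩ := h
      rw [Finset.sum_eq_single_of_mem X hX]
      · simp [he]
      · intro Y hY hne
        rw [if_neg]
        intro h'
        exact hne (hdis e (Multiset.mem_cons_self _ _) Y hY X hX h' he)
    · rw [Multiset.filter_cons_of_neg (p := fun e => ∃ X ∈ S, e ∈ X.sym2) _ h, Finset.sum_eq_zero]
      · simp
      · intro X hX
        rw [if_neg]
        exact fun he => h ⟨X, hX, he⟩

/-- A maximal sparse set is maximum. -/
lemma maximal_max {k l : ℤ} {W : Finset V}
    {E I J : Multiset (Sym2 V)} (hE : ∀ e ∈ E, ¬ e.IsDiag)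
    (hIE : I ≤ E) (hJE : J ≤ E) (hI : sp k l W I) (hJ : sp k l W J)
    (hmax : ∀ e, e ::ₘ I ≤ E → ¬ sp k l W (e ::ₘ I)) :
    Multiset.card J ≤ Multiset.card I := by
  classical
  let T : Finset (Finset V) := W.powerset.filter
    (fun X => 2 ≤ X.card ∧ (ii I X : ℤ) = k * X.card - l)
  have hT : ∀ X, X ∈ T ↔ X ⊆ W ∧ 2 ≤ X.card ∧ (ii I X : ℤ) = k * X.card - l := by
    intro X; simp [T]
  let S : Finset (Finset V) := T.filter (fun X => ∀ Y ∈ T, X ⊆ Y → X = Y)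
  have hS : ∀ X, X ∈ S ↔ X ∈ T ∧ ∀ Y ∈ T, X ⊆ Y → X = Y := by intro X; simp [S]
  have hunion : ∀ X ∈ T, ∀ Y ∈ T, 2 ≤ (X ∩ Y).card → X ∪ Y ∈ T := by
    intro X hX Y hY h2
    rw [hT] at *
    obtain ⟨x1, x2, x3⟩ := hX
    obtain ⟨y1, y2, y3⟩ := hY
    have hU : X ∪ Y ⊆ W := Finset.union_subset x1 y1
    have hc : X.card ≤ (X ∪ Y).card := Finset.card_le_card Finset.subset_union_left
    refine ⟨hU, by omega, ?_⟩
    have a1 := hI (X ∪ Y) hU (by omega)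
    have a2 := hI (X ∩ Y) (Finset.inter_subset_left.trans x1) h2
    have a3 : (ii I X : ℤ) + ii I Y ≤ ii I (X ∪ Y) + ii I (X ∩ Y) := by
      exact_mod_cast ii_super I X Y
    have a4 : ((X ∪ Y).card : ℤ) + (X ∩ Y).card = X.card + Y.card := by
      exact_mod_cast Finset.card_union_add_card_inter X Y
    have a5 : k * ((X ∪ Y).card : ℤ) + k * (X ∩ Y).card = k * X.card + k * Y.card := by
      rw [← mul_add, a4, mul_add]
    linarith
  have hdis : ∀ K ≤ E, ∀ e ∈ K, ∀ X ∈ S, ∀ Y ∈ S, e ∈ X.sym2 → e ∈ Y.sym2 → X = Y := by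
    intro K hK e he X hX Y hY h1 h2
    have hc := two_le_of_mem (hE e (Multiset.mem_of_le hK he)) (mem_inter_sym2 h1 h2)
    rw [hS] at hX hY
    have hu := hunion X hX.1 Y hY.1 hc
    rw [hX.2 _ hu Finset.subset_union_left]
    exact (hY.2 _ hu Finset.subset_union_right).symm
  have hcov : ∀ X ∈ T, ∃ Y ∈ S, X ⊆ Y := by
    intro X hX
    obtain ⟨Y, hY, hm⟩ := Finset.exists_max_image (T.filter (fun Y => X ⊆ Y)) Finset.card
      ⟨X, by simp [hX]⟩
    rw [Finset.mem_filter] at hY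
    refine ⟨Y, (hS Y).2 ⟨hY.1, ?_⟩, hY.2⟩
    intro Z hZ hYZ
    exact Finset.eq_of_subset_of_card_le hYZ
      (hm Z (Finset.mem_filter.2 ⟨hZ, hY.2.trans hYZ⟩))
  let p : Sym2 V → Prop := fun e => ∃ X ∈ S, e ∈ X.sym2
  have hIc := card_cover I S (hdis I hIE)
  have hJc := card_cover J S (hdis J hJE)
  have hsum : ∑ X ∈ S, ii J X ≤ ∑ X ∈ S, ii I X := by
    apply Finset.sum_le_sum
    intro X hX
    have hX' := (hT X).1 ((hS X).1 hX).1
    have := hJ X hX'.1 hX'.2.1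
    have := hX'.2.2
    omega
  have hrest : J.filter (fun e => ¬ p e) ≤ I.filter (fun e => ¬ p e) := by
    rw [Multiset.le_iff_count]
    intro e
    rw [Multiset.count_filter, Multiset.count_filter]
    by_cases hp : ¬ p e
    · rw [if_pos hp, if_pos hp]
      by_contra hlt
      push Not at hlt
      have hle : e ::ₘ I ≤ E := by
        rw [Multiset.le_iff_count]
        intro f
        have b1 := Multiset.le_iff_count.1 hIE f
        have b2 := Multiset.le_iff_count.1 hJE f
        rw [Multiset.count_cons]
        split_ifs with hf
        · subst hf; omega
        · omega
      have hns := hmax e hle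
      apply hns
      intro X hX h2
      by_contra hgt
      have c1 := hI X hX h2
      by_cases heX : e ∈ X.sym2
      · have : ii (e ::ₘ I) X = ii I X + 1 := by
          unfold ii; rw [Multiset.filter_cons_of_pos _ heX]; simp
        have hXT : X ∈ T := (hT X).2 ⟨hX, h2, by omega⟩
        obtain ⟨Y, hY, hXY⟩ := hcov X hXT
        exact hp ⟨Y, hY, Finset.sym2_mono hXY heX⟩
      · have : ii (e ::ₘ I) X = ii I X := by
          unfold ii; rw [Multiset.filter_cons_of_neg _ heX]
        omega
    · rw [if_neg hp, if_neg hp]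
  have hrest' := Multiset.card_le_card hrest
  have e1 : Multiset.card J = Multiset.card (J.filter p) + Multiset.card (J.filter (fun e => ¬ p e)) := by
    rw [← Multiset.card_add, Multiset.filter_add_not]
  have e2 : Multiset.card I = Multiset.card (I.filter p) + Multiset.card (I.filter (fun e => ¬ p e)) := by
    rw [← Multiset.card_add, Multiset.filter_add_not]
  rw [e1, e2]
  have e3 : Multiset.card (J.filter p) = ∑ X ∈ S, ii J X := by convert hJc
  have e4 : Multiset.card (I.filter p) = ∑ X ∈ S, ii I X := by convert hIc
  omega

/-- extension to a maximum sparse set -/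
lemma exists_basis {k l : ℤ} {W : Finset V}
    {E I : Multiset (Sym2 V)} (hE : ∀ e ∈ E, ¬ e.IsDiag)
    (hIE : I ≤ E) (hI : sp k l W I) :
    ∃ K, I ≤ K ∧ K ≤ E ∧ sp k l W K ∧
      ∀ J, J ≤ E → sp k l W J → Multiset.card J ≤ Multiset.card K := by
  classical
  obtain ⟨K, hK, hm⟩ := Finset.exists_max_image
    (E.powerset.toFinset.filter (fun K => I ≤ K ∧ sp k l W K)) Multiset.card
    ⟨I, by simp [hIE, hI]⟩
  simp only [Finset.mem_filter, Multiset.mem_toFinset, Multiset.mem_powerset] at hK hm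
  refine ⟨K, hK.2.1, hK.1, hK.2.2, fun J hJ hs => maximal_max hE hK.1 hJ hK.2.2 hs ?_⟩
  intro e he hse
  have := hm (e ::ₘ K) ⟨he, hK.2.1.trans (Multiset.le_cons_self _ _), hse⟩
  simp at this

lemma maxSparse_eq {k l : ℤ} (G : MG V) {K : Multiset (Sym2 V)} (hKE : K ≤ G.edges)
    (hK : sp k l G.verts K)
    (hm : ∀ J, J ≤ G.edges → sp k l G.verts J → Multiset.card J ≤ Multiset.card K) :
    MG.maxSparseCard k l G = Multiset.card K := by
  unfold MG.maxSparseCard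
  apply IsGreatest.csSup_eq
  refine ⟨⟨K, hKE, (sparse_iff k l _ _).2 hK, rfl⟩, ?_⟩
  rintro n ⟨J, hJ, hs, rfl⟩
  exact hm J hJ ((sparse_iff k l _ _).1 hs)

lemma fwd {k l : ℤ} {W VH X0 : Finset V} {A B : V} (hVH : VH ⊆ W)
    (hA : A ∈ VH) (hB : B ∈ VH) (hAB : A ≠ B)
    {F O E0 : Multiset (Sym2 V)} (hE0 : E0 ≤ F) (hX0 : X0 ⊆ VH) (hE0X : ∀ e ∈ E0, e ∈ X0.sym2)
    (hAX : A ∈ X0) (hBX : B ∈ X0) {M : ℕ}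
    (hM : (M : ℤ) = Multiset.card E0 - k * X0.card + 2 * k)
    (h : sp k l W (F + O)) :
    sp k l ((W \ VH) ∪ {A, B}) (Multiset.replicate M s(A, B) + O) := by
  intro X hX h2
  have hXW : X ⊆ W := by
    intro x hx
    have := hX hx
    simp only [Finset.mem_union, Finset.mem_sdiff, Finset.mem_insert, Finset.mem_singleton] at this
    rcases this with h | rfl | rfl
    · exact h.1
    · exact hVH hA
    · exact hVH hB
  rw [ii_add]
  by_cases hc : A ∈ X ∧ B ∈ X
  · have h1 := ii_le_card (Multiset.replicate M s(A, B)) X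
    rw [Multiset.card_replicate] at h1
    have hU := h (X ∪ X0) (Finset.union_subset hXW (hX0.trans hVH))
      (h2.trans (Finset.card_le_card Finset.subset_union_left))
    rw [ii_add] at hU
    have h3 : ii O X ≤ ii O (X ∪ X0) := ii_mono O Finset.subset_union_left
    have h4 : Multiset.card E0 ≤ ii F (X ∪ X0) := by
      rw [← ii_eq_card hE0X]
      exact (ii_mono_left hE0 X0).trans (ii_mono F Finset.subset_union_right)
    have hint : X ∩ X0 = {A, B} := by
      ext x
      simp only [Finset.mem_inter, Finset.mem_insert, Finset.mem_singleton]
      constructor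
      · rintro ⟨hx, hx0⟩
        have := hX hx
        simp only [Finset.mem_union, Finset.mem_sdiff, Finset.mem_insert, Finset.mem_singleton] at this
        rcases this with h | h
        · exact absurd (hX0 hx0) h.2
        · exact h
      · rintro (rfl | rfl)
        · exact ⟨hc.1, hAX⟩
        · exact ⟨hc.2, hBX⟩
    have h5 := Finset.card_union_add_card_inter X X0
    rw [hint, Finset.card_pair hAB] at h5
    have h6 : ((X ∪ X0).card : ℤ) = X.card + X0.card - 2 := by omega
    rw [h6] at hU
    push_cast at hU ⊢
    have h7 : (ii O X : ℤ) ≤ ii O (X ∪ X0) := by exact_mod_cast h3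
    have h8 : (Multiset.card E0 : ℤ) ≤ ii F (X ∪ X0) := by exact_mod_cast h4
    have h9 : (ii (Multiset.replicate M s(A, B)) X : ℤ) ≤ M := by exact_mod_cast h1
    linarith
  · have h1 : ii (Multiset.replicate M s(A, B)) X = 0 := by
      unfold ii
      rw [Multiset.card_eq_zero, Multiset.filter_eq_nil]
      intro e he
      rw [Multiset.eq_of_mem_replicate he, Finset.mk_mem_sym2_iff]
      exact hc
    have := h X hXW h2
    rw [ii_add] at this
    rw [h1]
    push_cast at this ⊢
    linarith [Int.natCast_nonneg (ii F X)]

lemma bwd {k l : ℤ} (hk : 1 ≤ k) (hkl : k ≤ l) (hl2k : l < 2 * k)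
    {W VH : Finset V} {A B : V} (hA : A ∈ VH) (hB : B ∈ VH) (hAB : A ≠ B)
    {F O : Multiset (Sym2 V)} {M : ℕ}
    (hFd : ∀ e ∈ F, ¬ e.IsDiag) (hOd : ∀ e ∈ O, ¬ e.IsDiag)
    (hF : ∀ e ∈ F, e ∈ VH.sym2) (hFs : sp k l VH F)
    (hr : ∀ Y ⊆ VH, A ∈ Y → B ∈ Y → (ii F Y : ℤ) ≤ M - 2 * k + k * Y.card)
    (hO : ∀ e ∈ O, ∀ v ∈ e, v ∈ VH → v = A ∨ v = B)
    (h : sp k l ((W \ VH) ∪ {A, B}) (Multiset.replicate M s(A, B) + O)) :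
    sp k l W (F + O) := by
  intro X hX h2
  rw [ii_add]
  have hF1 : ii F X ≤ ii F (X ∩ VH) := ii_le_of_imp fun e he hx => mem_inter_sym2 hx (hF e he)
  have hO1 : ii O X ≤ ii O ((X \ VH) ∪ (X ∩ {A, B})) := by
    apply ii_le_of_imp
    intro e he hx
    rw [Finset.mem_sym2_iff] at *
    intro v hv
    have h1 := hx v hv
    by_cases hvH : v ∈ VH
    · have := hO e he v hv hvH
      simp [h1, this]
    · simp [h1, hvH]
  set X' := (X \ VH) ∪ (X ∩ {A, B}) with hX'
  have hX'W : X' ⊆ (W \ VH) ∪ {A, B} := by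
    intro x hx
    simp only [hX', Finset.mem_union, Finset.mem_sdiff, Finset.mem_inter] at hx ⊢
    rcases hx with hx | hx
    · exact Or.inl ⟨hX hx.1, hx.2⟩
    · exact Or.inr hx.2
  have hcX : X.card = (X \ VH).card + (X ∩ VH).card := by
    rw [Finset.card_sdiff_add_card_inter]
  have hcX' : X'.card = (X \ VH).card + (X ∩ {A, B}).card := by
    rw [hX', Finset.card_union_of_disjoint]
    rw [Finset.disjoint_left]
    intro x hx hx'
    simp only [Finset.mem_sdiff, Finset.mem_inter, Finset.mem_insert, Finset.mem_singleton] at hx hx'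
    rcases hx'.2 with rfl | rfl
    · exact hx.2 hA
    · exact hx.2 hB
  have hsub : (X ∩ {A, B}).card ≤ (X ∩ VH).card := by
    apply Finset.card_le_card
    apply Finset.inter_subset_inter_left
    intro x hx
    simp only [Finset.mem_insert, Finset.mem_singleton] at hx
    rcases hx with rfl | rfl <;> assumption
  have hF2 : (ii F X : ℤ) ≤ ii F (X ∩ VH) := by exact_mod_cast hF1
  have hO2 : (ii O X : ℤ) ≤ ii O X' := by exact_mod_cast hO1
  have hXz : (X.card : ℤ) = (X \ VH).card + (X ∩ VH).card := by exact_mod_cast hcX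
  have hXz' : (X'.card : ℤ) = (X \ VH).card + (X ∩ {A, B}).card := by exact_mod_cast hcX'
  push_cast
  by_cases hc : A ∈ X ∧ B ∈ X
  · have hint : X ∩ {A, B} = {A, B} := by
      apply Finset.inter_eq_right.2
      intro x hx
      simp only [Finset.mem_insert, Finset.mem_singleton] at hx
      rcases hx with rfl | rfl
      · exact hc.1
      · exact hc.2
    rw [hint, Finset.card_pair hAB] at hcX' hXz'
    have h1 := h X' hX'W (by omega)
    have hAX' : A ∈ X' := by simp [hX', hc.1]
    have hBX' : B ∈ X' := by simp [hX', hc.2]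
    have hP : ii (Multiset.replicate M s(A, B)) X' = M := by
      rw [ii_eq_card, Multiset.card_replicate]
      intro e he
      rw [Multiset.eq_of_mem_replicate he, Finset.mk_mem_sym2_iff]
      exact ⟨hAX', hBX'⟩
    rw [ii_add, hP, hXz'] at h1
    have h3 := hr (X ∩ VH) Finset.inter_subset_right (by simp [hc.1, hA]) (by simp [hc.2, hB])
    rw [hXz]
    push_cast at h1
    linarith
  · have hint : (X ∩ {A, B}).card ≤ 1 := by
      rw [Finset.card_le_one]
      intro a ha b hb
      simp only [Finset.mem_inter, Finset.mem_insert, Finset.mem_singleton] at ha hb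
      grind
    have hOX : 2 ≤ X'.card → (ii O X' : ℤ) ≤ k * X'.card - l := by
      intro hh
      have := h X' hX'W hh
      rw [ii_add] at this
      push_cast at this
      linarith [Int.natCast_nonneg (ii (Multiset.replicate M s(A, B)) X')]
    have hO0 : X'.card < 2 → (ii O X' : ℤ) = 0 := fun hh => by
      exact_mod_cast ii_eq_zero hOd hh
    have hF0 : (X ∩ VH).card < 2 → (ii F (X ∩ VH) : ℤ) = 0 := fun hh => by
      exact_mod_cast ii_eq_zero hFd hh
    have hFX := hFs (X ∩ VH) Finset.inter_subset_right
    have hle1 : (X'.card : ℤ) ≤ X.card := by omega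
    have hle2 : ((X ∩ VH).card : ℤ) ≤ X.card := by omega
    have hle3 : (X'.card : ℤ) + (X ∩ VH).card ≤ X.card + 1 := by omega
    have h2z : (2 : ℤ) ≤ X.card := by exact_mod_cast h2
    have m1 := mul_le_mul_of_nonneg_left hle1 (by linarith : (0:ℤ) ≤ k)
    have m2 := mul_le_mul_of_nonneg_left hle2 (by linarith : (0:ℤ) ≤ k)
    have m3 := mul_le_mul_of_nonneg_left hle3 (by linarith : (0:ℤ) ≤ k)
    have m4 := mul_le_mul_of_nonneg_left h2z (by linarith : (0:ℤ) ≤ k)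
    rw [mul_add, mul_add] at m3
    by_cases c1 : X'.card < 2 <;> by_cases c2 : (X ∩ VH).card < 2
    · have := hO0 c1; have := hF0 c2; linarith
    · have := hO0 c1; have := hFX (by omega); linarith
    · have := hOX (by omega); have := hF0 c2; linarith
    · have := hOX (by omega); have := hFX (by omega); linarith

end NR

/-- Proposition 3.2 (ii): let `H`, the subgraph of `G` induced by `VH`,
satisfy the renormalizability condition w.r.t. `A, B`. Then the numbers of
`(k,l)`-redundant edges satisfy `n_red(G) = n_red(R(G)) + n_red(H)`. -/
theorem nred_renorm {V : Type*} [DecidableEq V] (k l : ℤ)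
    (hk : 1 ≤ k) (hkl : k ≤ l) (hl2k : l < 2 * k)
    (G : MG V) (hWF : G.WF) (VH : Finset V) (hVH : VH ⊆ G.verts)
    (A B : V) (hA : A ∈ VH) (hB : B ∈ VH) (hAB : A ≠ B)
    (hren : MG.RenormCond G VH A B) :
    MG.nred k l G =
      MG.nred k l (MG.renormG k l G VH A B) + MG.nred k l (G.induced VH) := by
  set EH := G.edges.filter (· ∈ VH.sym2) with hEH
  set EO := G.edges.filter (fun e => e ∉ VH.sym2) with hEO
  have hsplit : EH + EO = G.edges := Multiset.filter_add_not _ _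
  have hEHd : ∀ e ∈ EH, ¬ e.IsDiag := fun e he => hWF.1 e (Multiset.mem_filter.1 he).1
  have hEOd : ∀ e ∈ EO, ¬ e.IsDiag := fun e he => hWF.1 e (Multiset.mem_filter.1 he).1
  have hEHm : ∀ e ∈ EH, e ∈ VH.sym2 := fun e he => (Multiset.mem_filter.1 he).2
  have hEOm : ∀ e ∈ EO, e ∉ VH.sym2 := fun e he => (Multiset.mem_filter.1 he).2
  have hOv : ∀ e ∈ EO, ∀ v ∈ e, v ∈ VH → v = A ∨ v = B := by
    intro e he v hv hvH
    have h1 := hEOm e he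
    rw [Finset.mem_sym2_iff] at h1
    push Not at h1
    obtain ⟨w, hw, hwH⟩ := h1
    have hne : v ≠ w := fun h => hwH (h ▸ hvH)
    have he2 : e = s(v, w) := (Sym2.mem_and_mem_iff hne).1 ⟨hv, hw⟩
    have := hren e (Multiset.mem_filter.1 he).1 ⟨v, hv, hvH⟩ ⟨w, hw, hwH⟩
    rw [he2, Sym2.mem_iff, Sym2.mem_iff] at this
    rcases this with (h | h) | (h | h)
    · exact Or.inl h.symm
    · exact absurd (h ▸ hA) hwH
    · exact Or.inr h.symm
    · exact absurd (h ▸ hB) hwH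
  -- the optimal h
  set S : Set ℤ := {z : ℤ | ∃ h : MG V, h.IsSubgraph (G.induced VH) ∧ MG.Sparse k l h ∧
    A ∈ h.verts ∧ B ∈ h.verts ∧ z = (Multiset.card h.edges : ℤ) - k * h.verts.card} with hS
  have hpair : ∀ X : Finset V, A ∈ X → B ∈ X → 2 ≤ X.card := fun X h1 h2 =>
    Finset.one_lt_card.2 ⟨A, h1, B, h2, hAB⟩
  have hSub : ∀ z ∈ S, z ≤ -l := by
    rintro z ⟨h, hs, hsp, h1, h2, rfl⟩
    have := hsp h ⟨subset_rfl, le_rfl, hs.2.2⟩ (hpair _ h1 h2)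
    linarith
  have hSbdd : BddAbove S := ⟨-l, hSub⟩
  have hS0 : -2 * k ∈ S := by
    refine ⟨⟨{A, B}, 0⟩, ⟨?_, Multiset.zero_le _, by simp⟩, ?_, by simp, by simp, ?_⟩
    · intro x hx
      simp only [Finset.mem_insert, Finset.mem_singleton] at hx
      rcases hx with rfl | rfl <;> assumption
    · rw [NR.sparse_iff]
      intro X _ h2
      have : (2 : ℤ) ≤ X.card := by exact_mod_cast h2
      simp only [NR.ii, Multiset.filter_zero, Multiset.card_zero]
      push_cast
      nlinarith
    · simp [Finset.card_pair hAB]; ring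
  have hmem : sSup S ∈ S := Int.csSup_mem ⟨_, hS0⟩ hSbdd
  have hge : -2 * k ≤ sSup S := le_csSup hSbdd hS0
  have hr : MG.rAB k l (G.induced VH) A B = sSup S := rfl
  have hMz : ((MG.MAB k l (G.induced VH) A B).toNat : ℤ) = sSup S + 2 * k := by
    unfold MG.MAB
    rw [hr, max_eq_left (by linarith), Int.toNat_of_nonneg (by linarith)]
  have hMle := hSub _ hmem
  obtain ⟨⟨X0, E0⟩, hs0, hsp0, hA0, hB0, hr0⟩ := hmem
  have hR : MG.renormG k l G VH A B = ⟨(G.verts \ VH) ∪ {A, B}, EO +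
    Multiset.replicate (MG.MAB k l (G.induced VH) A B).toNat s(A, B)⟩ := rfl
  rw [hR]
  generalize (MG.MAB k l (G.induced VH) A B).toNat = M at hMz
  set P := Multiset.replicate M s(A, B) with hP
  have hH : G.induced VH = ⟨VH, EH⟩ := rfl
  rw [hH]
  obtain ⟨hX0, hE0, hE0X⟩ := hs0
  simp only [hH] at hX0 hE0 hE0X hA0 hB0 hr0
  have hE0s : NR.sp k l VH E0 := NR.sp_extend hk hl2k
    (fun e he => hEHd e (Multiset.mem_of_le hE0 he)) hE0X ((NR.sparse_iff k l _ _).1 hsp0)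
  obtain ⟨F, hE0F, hFE, hFs, hFm⟩ := NR.exists_basis hEHd hE0 hE0s
  have hFd : ∀ e ∈ F, ¬ e.IsDiag := fun e he => hEHd e (Multiset.mem_of_le hFE he)
  have hFv : ∀ e ∈ F, e ∈ VH.sym2 := fun e he => hEHm e (Multiset.mem_of_le hFE he)
  -- basis of G
  obtain ⟨K, hFK, hKE, hKs, hKm⟩ := NR.exists_basis (k := k) (l := l) (W := G.verts) hWF.1
    (hFE.trans (Multiset.filter_le _ _)) (NR.sp_extend hk hl2k hFd hFv hFs)
  have hKF : K.filter (· ∈ VH.sym2) = F := by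
    symm
    apply Multiset.eq_of_le_of_card_le (Multiset.le_filter.2 ⟨hFK, hFv⟩)
    apply hFm _ (Multiset.filter_le_filter _ hKE)
    intro X hX h2
    exact NR.sp_mono_left (Multiset.filter_le _ _) hKs X (hX.trans hVH) h2
  have hKO := Multiset.filter_add_not (· ∈ VH.sym2) K
  rw [hKF] at hKO
  set O := K.filter (fun e => e ∉ VH.sym2) with hOdef
  have hOE : O ≤ EO := Multiset.filter_le_filter _ hKE
  -- basis of R
  have hPv : ∀ e ∈ P, e ∈ ({A, B} : Finset V).sym2 := by
    intro e he
    rw [Multiset.eq_of_mem_replicate he, Finset.mk_mem_sym2_iff]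
    simp
  have hPH : ∀ e ∈ P, e ∈ VH.sym2 := by
    intro e he
    rw [Multiset.eq_of_mem_replicate he, Finset.mk_mem_sym2_iff]
    exact ⟨hA, hB⟩
  have hPd : ∀ e ∈ P, ¬ e.IsDiag := by
    intro e he
    rw [Multiset.eq_of_mem_replicate he]
    simpa using hAB
  have hPs : NR.sp k l ((G.verts \ VH) ∪ {A, B}) P := by
    apply NR.sp_extend hk hl2k hPd hPv
    intro X hX h2
    have h1 := NR.ii_le_card P X
    rw [Multiset.card_replicate] at h1
    have h1' : (NR.ii P X : ℤ) ≤ M := by exact_mod_cast h1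
    have : (2 : ℤ) ≤ X.card := by exact_mod_cast h2
    nlinarith
  have hRd : ∀ e ∈ EO + P, ¬ e.IsDiag := by
    intro e he
    rcases Multiset.mem_add.1 he with h | h
    · exact hEOd e h
    · exact hPd e h
  obtain ⟨K', hPK, hKE', hKs', hKm'⟩ := NR.exists_basis hRd (Multiset.le_add_left P EO) hPs
  have hKP : K'.filter (· ∈ VH.sym2) = P := by
    apply le_antisymm _ (Multiset.le_filter.2 ⟨hPK, hPH⟩)
    refine (Multiset.filter_le_filter _ hKE').trans ?_
    rw [Multiset.filter_add, Multiset.filter_eq_nil.2 hEOm, zero_add]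
    exact Multiset.filter_le _ _
  have hKO' := Multiset.filter_add_not (· ∈ VH.sym2) K'
  rw [hKP] at hKO'
  set O' := K'.filter (fun e => e ∉ VH.sym2) with hOdef'
  have hOE' : O' ≤ EO := by
    refine (Multiset.filter_le_filter _ hKE').trans ?_
    rw [Multiset.filter_add, Multiset.filter_eq_nil.2 (fun e he => not_not.2 (hPH e he)), add_zero]
    exact Multiset.filter_le _ _
  -- comparison
  have c1 : Multiset.card (P + O) ≤ Multiset.card K' := by
    apply hKm'
    · rw [add_comm]; exact add_le_add_left hOE P
    · exact NR.fwd hVH hA hB hAB hE0F hX0 hE0X hA0 hB0 (by rw [hMz, hr0]) (hKO ▸ hKs)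
  have c2 : Multiset.card (F + O') ≤ Multiset.card K := by
    apply hKm
    · rw [← hsplit]; exact add_le_add hFE hOE'
    · apply NR.bwd hk hkl hl2k hA hB hAB hFd
        (fun e he => hEOd e (Multiset.mem_of_le hOE' he)) hFv hFs _
        (fun e he => hOv e (Multiset.mem_of_le hOE' he)) (hKO' ▸ hKs')
      intro Y hY hAY hBY
      have : (NR.ii F Y : ℤ) - k * Y.card ∈ S := by
        refine ⟨⟨Y, F.filter (· ∈ Y.sym2)⟩, ⟨hY, (Multiset.filter_le _ _).trans hFE, ?_⟩,
          ?_, hAY, hBY, rfl⟩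
        · intro e he
          exact (Multiset.mem_filter.1 he).2
        · rw [NR.sparse_iff]
          intro X hX h2
          exact NR.sp_mono_left (Multiset.filter_le _ _) hFs X (hX.trans hY) h2
      have := le_csSup hSbdd this
      linarith
  have r1 := NR.maxSparse_eq G hKE hKs hKm
  have r2 := NR.maxSparse_eq ⟨(G.verts \ VH) ∪ {A, B}, EO + P⟩ hKE' hKs' hKm'
  have r3 := NR.maxSparse_eq ⟨VH, EH⟩ hFE hFs hFm
  unfold MG.nred
  rw [r1, r2, r3]
  have s1 := congrArg Multiset.card hsplit
  have s2 := congrArg Multiset.card hKO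
  have s3 := congrArg Multiset.card hKO'
  have s4 := Multiset.card_le_card hFE
  have s5 := Multiset.card_le_card hOE

  simp only [Multiset.card_add] at *
  omega
end

section
/- Let k, l be integers with k ≤ l < 2k and k ≥ 1. Then no minimal (k,l)-redundant multigraph G = (V, E) (i.e., G is (k,l)-redundant and every proper subgraph of G is (k,l)-sparse) can be written as the union of two subgraphs G₁ = (V₁, E₁) and G₂ = (V₂, E₂) with |V₁| ≥ 2, |V₂| ≥ 2, V = V₁ ∪ V₂, V₁ ∩ V₂ consisting of exactly one vertex, and E the disjoint union of E₁ and E₂. -/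
/-- for `k ≤ l < 2k`, `k ≥ 1`, no minimal `(k,l)`-redundant multigraph `G`
can be written as the union of two subgraphs, each with at least two vertices, sharing
exactly one vertex, whose edge multisets partition the edges of `G`. -/
theorem minimal_redundant_no_one_vertex_decomposition {V : Type*} [DecidableEq V]
    (k l : ℤ) (hk : 1 ≤ k) (hkl : k ≤ l) (hl2k : l < 2 * k)
    (G : MG V) (hWF : G.WF) (hred : MG.Redundant k l G)
    (hmin : ∀ G' : MG V, G'.IsSubgraph G → G' ≠ G → MG.Sparse k l G') :
    ¬ ∃ G₁ G₂ : MG V, G₁.IsSubgraph G ∧ G₂.IsSubgraph G ∧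
      2 ≤ G₁.verts.card ∧ 2 ≤ G₂.verts.card ∧
      G.verts = G₁.verts ∪ G₂.verts ∧ (G₁.verts ∩ G₂.verts).card = 1 ∧
      G.edges = G₁.edges + G₂.edges := by
  rintro ⟨G₁, G₂, h1, h2, c1, c2, hV, hI, hE⟩
  have hu := Finset.card_union_add_card_inter G₁.verts G₂.verts
  rw [← hV, hI] at hu
  have n1 : G₁ ≠ G := by
    rintro rfl
    omega
  have n2 : G₂ ≠ G := by
    rintro rfl
    omega
  have m1 := hmin G₁ h1 n1 G₁ ⟨Finset.Subset.refl _, le_refl _, h1.2.2⟩ (by omega)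
  have m2 := hmin G₂ h2 n2 G₂ ⟨Finset.Subset.refl _, le_refl _, h2.2.2⟩ (by omega)
  apply hred
  intro G' hG' hc
  by_cases hg : G' = G
  · subst hg
    rw [hE, Multiset.card_add]
    have hn : (G'.verts.card : ℤ) = G₁.verts.card + G₂.verts.card - 1 := by omega
    rw [hn]
    push_cast
    linarith
  · exact hmin G' hG' hg G' ⟨Finset.Subset.refl _, le_refl _, hG'.2.2⟩ hc
end

section
/- For (k,l) = (2,1), the renormalization formula for redundant edges fails: there exist a multigraph G = (V, E), a subset V_H ⊆ V with distinct vertices A, B ∈ V_H, such that the induced subgraph H = (V_H, E_H) satisfies the renormalizability condition with respect to A, B, H is (2,1)-sparse (so n_red(H) = 0), and yet n_red(G) ≠ n_red(R(G)) + n_red(H), where n_red and R are taken with respect to (k,l) = (2,1). -/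
theorem MG.sparse_of_check {V : Type*} [DecidableEq V] (G : MG V)
    (h : ∀ S ∈ G.verts.powerset, 1 < S.card →
      Multiset.card (G.edges.filter (· ∈ S.sym2)) + 1 ≤ 2 * S.card) : MG.Sparse 2 1 G := by
  rintro G' ⟨hv, he, hs⟩ hc
  have h1 := h G'.verts (Finset.mem_powerset.2 hv) hc
  have h2 : G'.edges ≤ G.edges.filter (· ∈ G'.verts.sym2) := Multiset.le_filter.2 ⟨he, hs⟩
  have h3 := Multiset.card_le_card h2
  have : (Multiset.card G'.edges) + 1 ≤ 2 * G'.verts.card := by omega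
  omega

theorem MG.nred_eq_zero_of_sparse {V : Type*} [DecidableEq V] (G : MG V)
    (h : MG.Sparse 2 1 G) : MG.nred 2 1 G = 0 := by
  unfold MG.nred MG.maxSparseCard
  apply Nat.sub_eq_zero_of_le
  apply le_csSup
  · refine ⟨Multiset.card G.edges, ?_⟩
    rintro n ⟨E', hE, -, rfl⟩
    exact Multiset.card_le_card hE
  · exact ⟨G.edges, le_rfl, h, rfl⟩

/-- The counterexample. -/
def MG.exG : MG ℕ :=
  ⟨{0, 1, 2, 3}, {s(0, 2), s(0, 2), s(0, 2), s(0, 3), s(0, 3), s(0, 3)}⟩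

theorem MG.exG_induced : MG.exG.induced {0, 1, 2} =
    ⟨{0, 1, 2}, {s(0, 2), s(0, 2), s(0, 2)}⟩ := by
  unfold MG.induced MG.exG
  congr 1

theorem MG.exG_rAB : MG.rAB 2 1 (MG.exG.induced {0, 1, 2}) 0 1 ≤ -3 := by
  rw [MG.exG_induced]
  unfold MG.rAB
  apply csSup_le
  · refine ⟨_, ⟨{0, 1}, 0⟩, ⟨by decide, by simp, by simp⟩, ?_, by simp, by simp, rfl⟩
    apply MG.sparse_of_check
    decide
  · rintro z ⟨⟨vs, es⟩, ⟨hv, he, hs⟩, -, hA, hB, rfl⟩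
    dsimp only at *
    have hc := Multiset.card_le_card he
    have hc3 : Multiset.card es ≤ 3 := hc
    by_cases h2 : 2 ∈ vs
    · have : ({0, 1, 2} : Finset ℕ) ⊆ vs := by
        intro x hx
        simp only [Finset.mem_insert, Finset.mem_singleton] at hx
        rcases hx with rfl | rfl | rfl <;> assumption
      have h3 := Finset.card_le_card this
      have h3' : 3 ≤ vs.card := h3
      omega
    · have : ({0, 1} : Finset ℕ) ⊆ vs := by
        intro x hx
        simp only [Finset.mem_insert, Finset.mem_singleton] at hx
        rcases hx with rfl | rfl <;> assumption
      have h3 := Finset.card_le_card this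
      have h3' : 2 ≤ vs.card := h3
      have h0 : es = 0 := by
        apply Multiset.eq_zero_of_forall_notMem
        intro e hee
        have h4 := Multiset.mem_of_le he hee
        simp at h4
        subst h4
        have := hs _ hee
        rw [Finset.mk_mem_sym2_iff] at this
        exact h2 this.2
      subst h0
      simp
      omega

theorem MG.exG_renorm_sparse : MG.Sparse 2 1 (MG.renormG 2 1 MG.exG {0, 1, 2} 0 1) := by
  have hM : (MG.MAB 2 1 (MG.exG.induced {0, 1, 2}) 0 1).toNat ≤ 1 := by
    have := MG.exG_rAB
    unfold MG.MAB
    omega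
  unfold MG.renormG
  generalize (MG.MAB 2 1 (MG.exG.induced {0, 1, 2}) 0 1).toNat = m at hM
  apply MG.sparse_of_check
  interval_cases m <;> decide

theorem MG.exG_nred : 1 ≤ MG.nred 2 1 MG.exG := by
  have h : MG.maxSparseCard 2 1 MG.exG ≤ 5 := by
    unfold MG.maxSparseCard
    apply csSup_le'
    rintro n ⟨E', hE, hS, rfl⟩
    have hsub : ({0, 2, 3} : Finset ℕ) ⊆ MG.exG.verts := by decide
    have hcd : 1 < ({0, 2, 3} : Finset ℕ).card := by decide
    have h1 := hS ⟨{0, 2, 3}, E'⟩ ⟨hsub, le_rfl, ?_⟩ hcd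
    · have h3 : ({0, 2, 3} : Finset ℕ).card = 3 := rfl
      simp only [h3] at h1
      omega
    · intro e he
      have h4 := Multiset.mem_of_le hE he
      have h5 : ∀ e ∈ MG.exG.edges, e ∈ ({0, 2, 3} : Finset ℕ).sym2 := by decide
      exact h5 e h4
  have h6 : Multiset.card MG.exG.edges = 6 := rfl
  unfold MG.nred
  omega

/-- for `(k,l) = (2,1)` the renormalization formula for redundant edges
fails: there are a multigraph `G`, a vertex subset `V_H` with distinct `A, B ∈ V_H` such
that the induced subgraph `H` satisfies the renormalizability condition and is
`(2,1)`-sparse (so `n_red(H) = 0`), yet `n_red(G) ≠ n_red(R(G)) + n_red(H)`. -/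
theorem nred_renorm_fails_two_one :
    ∃ (G : MG ℕ) (VH : Finset ℕ) (A B : ℕ),
      G.WF ∧ VH ⊆ G.verts ∧ A ∈ VH ∧ B ∈ VH ∧ A ≠ B ∧
      MG.RenormCond G VH A B ∧
      MG.Sparse 2 1 (G.induced VH) ∧ MG.nred 2 1 (G.induced VH) = 0 ∧
      MG.nred 2 1 G ≠
        MG.nred 2 1 (MG.renormG 2 1 G VH A B) + MG.nred 2 1 (G.induced VH) := by
  have hs : MG.Sparse 2 1 (MG.exG.induced {0, 1, 2}) := by
    apply MG.sparse_of_check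
    decide
  refine ⟨MG.exG, {0, 1, 2}, 0, 1, ⟨by decide, by decide⟩, by decide, by decide, by decide,
    by decide, ?_, hs, MG.nred_eq_zero_of_sparse _ hs, ?_⟩
  · intro e he _ _
    left
    revert e
    have h : ∀ e ∈ MG.exG.edges, (0 : ℕ) ∈ e := by
      intro e he
      simp [MG.exG] at he
      rcases he with rfl | rfl <;> simp
    intro e he _ _
    exact h e he
  · rw [MG.nred_eq_zero_of_sparse _ hs, MG.nred_eq_zero_of_sparse _ MG.exG_renorm_sparse]
    have := MG.exG_nred
    omega
end
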